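/- arXiv:1005.5716 — 3 statements merged into one kernel-verified Lean document; each statement's English description precedes it below -/
import Mathlib

section
/- If p = C n^{-1/2} for some constant C > 0 and ε' > 0, then G(n,p) asymptotically almost surely satisfies the following: every subgraph G' of G(n,p) with minimum degree at least ε'np has the property that every vertex set X with |X| ≤ (ε'/80)n satisfies |N_{G'}(X) ∖ X| ≥ 2|X|. -/
/-!
Let `d = ε'np`. If a subgraph `G' ≤ G` of minimum degree at least `d` has a set `X` with `|X| ≤ δn`
and `|N_{G'}(X) ∖ X| < r|X|`, then `Y = X ∪ N_{G'}(X)` has fewer than `(1 + r)|X|` vertices and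
contains every edge of `G'` meeting `X`, so `Y` spans at least `d|X|/2 ≥ κ|Y|` edges of `G`, where
`κ = d / (2(1 + r))`.

The expected number of edges spanned by such a `Y` is at most `p|Y|²/2 ≤ ρκ|Y|` with
`ρ = (1 + r)²δ/ε'`. As `ρ < 1`, Chernoff's bound makes the probability of spanning `κ|Y|` edges at
most `q ^ |Y|`, where `q = exp (-ηκ)` for some `η > 0` depending only on `ρ`. The union bound over
all nonempty `Y` is `(1 + q) ^ n - 1 ≤ exp (nq) - 1`, and `nq → 0` as soon as `log n = o(np)`.
For `r = 2` and `δ = ε'/80`, `ρ = 9/80`.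
-/

open Filter Topology Classical

/-- Probability that a graph drawn from the binomial random graph G(n,p) (each pair of
vertices forming an edge independently with probability p) satisfies the predicate P. -/
noncomputable def gnpProb (V : Type) [Fintype V] [DecidableEq V] (p : ℝ)
    (P : SimpleGraph V → Prop) : ℝ :=
  ∑ G : SimpleGraph V,
    if P G then p ^ G.edgeSet.ncard *
      (1 - p) ^ ((Fintype.card V).choose 2 - G.edgeSet.ncard) else 0

/-- The neighborhood of a vertex set: all vertices adjacent to at least one vertex of X. -/
def setNbhd {V : Type} (G : SimpleGraph V) (X : Finset V) : Set V :=
  {u | ∃ v ∈ X, G.Adj v u}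

/-- The total degree of a vertex set. -/
noncomputable def totalDeg {V : Type} (G : SimpleGraph V) (X : Finset V) : ℝ :=
  ∑ v ∈ X, ((G.neighborSet v).ncard : ℝ)

open MeasureTheory ProbabilityTheory Asymptotics
open scoped SimpleGraph unitInterval Finset

instance measurableSingletonClass_simpleGraph {V : Type*} [Countable V] :
    MeasurableSingletonClass (SimpleGraph V) where
  measurableSet_singleton G := by
    have hG : {G} = SimpleGraph.edgeSet ⁻¹' {G.edgeSet} := by ext; simp
    exact hG ▸ SimpleGraph.measurable_edgeSet (measurableSet_singleton G.edgeSet)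

section Distribution

variable {V : Type*} [Fintype V] [DecidableEq V]

lemma binomialRandom_real_singleton (p : I) (G : SimpleGraph V) :
    G(V, p).real {G} =
      (p : ℝ) ^ #G.edgeFinset * (1 - p) ^ #((⊤ : SimpleGraph V).edgeFinset \ G.edgeFinset) := by
  have hcard : G.edgeSet.ncard = #G.edgeFinset := by
    rw [← SimpleGraph.coe_edgeFinset, Set.ncard_coe_finset]
  rw [Finset.card_sdiff_of_subset (SimpleGraph.edgeFinset_mono le_top),
    SimpleGraph.card_edgeFinset_top_eq_card_choose_two]
  simp [measureReal_def, hcard]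

lemma sum_eq_sum_powerset_edgeFinset_top {M : Type*} [AddCommMonoid M] (f : Finset (Sym2 V) → M) :
    ∑ G : SimpleGraph V, f G.edgeFinset = ∑ A ∈ (⊤ : SimpleGraph V).edgeFinset.powerset, f A := by
  refine Finset.sum_bij' (fun G _ => G.edgeFinset)
    (fun A _ => SimpleGraph.fromEdgeSet (A : Set (Sym2 V))) ?_ ?_ ?_ ?_ ?_
  · exact fun G _ => Finset.mem_powerset.2 (SimpleGraph.edgeFinset_mono le_top)
  · simp
  · simp
  · intro A hA
    have hdisj : Disjoint (A : Set (Sym2 V)) Sym2.diagSet := by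
      rwa [Finset.mem_powerset, ← Finset.coe_subset, SimpleGraph.coe_edgeFinset,
        SimpleGraph.edgeSet_top, Set.subset_compl_iff_disjoint_right] at hA
    rw [← Finset.coe_inj, SimpleGraph.coe_edgeFinset, SimpleGraph.edgeSet_fromEdgeSet,
      hdisj.sdiff_eq_left]
  · simp

lemma integral_prod_edgeFinset (p : I) (w : Sym2 V → ℝ) :
    ∫ G, ∏ e ∈ G.edgeFinset, w e ∂G(V, p) =
      ∏ e ∈ (⊤ : SimpleGraph V).edgeFinset, (p * w e + (1 - p)) := by
  rw [integral_fintype .of_finite, Finset.prod_add, ← sum_eq_sum_powerset_edgeFinset_top]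
  refine Finset.sum_congr rfl fun G _ => ?_
  rw [binomialRandom_real_singleton, Finset.prod_mul_distrib, Finset.prod_const,
    Finset.prod_const, smul_eq_mul]
  ring

lemma mgf_card_edgeFinset_inter (p : I) {S : Finset (Sym2 V)}
    (hS : S ⊆ (⊤ : SimpleGraph V).edgeFinset) (s : ℝ) :
    mgf (fun G : SimpleGraph V => (#(G.edgeFinset ∩ S) : ℝ)) G(V, p) s =
      (1 + p * (Real.exp s - 1)) ^ #S := by
  have hw (A : Finset (Sym2 V)) :
      ∏ e ∈ A, (if e ∈ S then Real.exp s else 1) = Real.exp (s * #(A ∩ S)) := by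
    rw [Finset.prod_ite_mem, Finset.prod_const, mul_comm, Real.exp_nat_mul]
  calc mgf (fun G : SimpleGraph V => (#(G.edgeFinset ∩ S) : ℝ)) G(V, p) s
      = ∏ e ∈ (⊤ : SimpleGraph V).edgeFinset,
          (p * (if e ∈ S then Real.exp s else 1) + (1 - p)) := by
        simp_rw [mgf, ← hw, integral_prod_edgeFinset]
    _ = ∏ e ∈ (⊤ : SimpleGraph V).edgeFinset, if e ∈ S then 1 + p * (Real.exp s - 1) else 1 := by
        refine Finset.prod_congr rfl fun e _ => ?_
        split_ifs <;> ring
    _ = (1 + p * (Real.exp s - 1)) ^ #S := by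
        rw [Finset.prod_ite_mem, Finset.inter_eq_right.2 hS, Finset.prod_const]

lemma measureReal_le_card_edgeFinset_inter_le (p : I) {S : Finset (Sym2 V)}
    (hS : S ⊆ (⊤ : SimpleGraph V).edgeFinset) {s : ℝ} (hs : 0 ≤ s) (k : ℝ) :
    G(V, p).real {G | k ≤ #(G.edgeFinset ∩ S)} ≤
      Real.exp (#S * (p * (Real.exp s - 1)) - s * k) := by
  have hbase : 0 ≤ 1 + p * (Real.exp s - 1) :=
    add_nonneg zero_le_one (mul_nonneg p.2.1 (sub_nonneg.2 (Real.one_le_exp hs)))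
  calc G(V, p).real {G | k ≤ #(G.edgeFinset ∩ S)}
      ≤ Real.exp (-s * k) * (1 + p * (Real.exp s - 1)) ^ #S := by
        rw [← mgf_card_edgeFinset_inter p hS]
        exact measure_ge_le_exp_mul_mgf k hs .of_finite
    _ ≤ Real.exp (-s * k) * Real.exp (p * (Real.exp s - 1)) ^ #S := by
        gcongr
        linarith [Real.add_one_le_exp (p * (Real.exp s - 1))]
    _ = Real.exp (#S * (p * (Real.exp s - 1)) - s * k) := by
        rw [← Real.exp_nat_mul, ← Real.exp_add]
        ring_nf

end Distribution

lemma gnpProb_eq_measureReal {V : Type} [Fintype V] [DecidableEq V] (p : I)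
    (P : SimpleGraph V → Prop) : gnpProb V p P = G(V, p).real {G | P G} := by
  have hweight (G : SimpleGraph V) : G(V, p).real {G} =
      (p : ℝ) ^ G.edgeSet.ncard * (1 - p) ^ ((Fintype.card V).choose 2 - G.edgeSet.ncard) := by
    simp [measureReal_def]
  have hset : {G | P G} = (Finset.univ.filter P : Finset (SimpleGraph V)) := by simp
  rw [hset, ← sum_measureReal_singleton, Finset.sum_filter]
  simp_rw [hweight, gnpProb]

lemma gnpProb_le_one {V : Type} [Fintype V] [DecidableEq V] (p : I) (P : SimpleGraph V → Prop) :
    gnpProb V p P ≤ 1 := by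
  rw [gnpProb_eq_measureReal]
  exact measureReal_le_one

/-- The two-element subsets of `Y`, that is, the edges of the complete graph on `Y`. -/
def pairsIn {V : Type*} [DecidableEq V] (Y : Finset V) : Finset (Sym2 V) :=
  Y.offDiag.image Sym2.mk.uncurry

section Pairs

variable {V : Type*} [DecidableEq V]

lemma mk_mem_pairsIn {Y : Finset V} {u v : V} : s(u, v) ∈ pairsIn Y ↔ u ∈ Y ∧ v ∈ Y ∧ u ≠ v := by
  simp only [pairsIn, Finset.mem_image, Finset.mem_offDiag, Prod.exists]
  aesop

lemma card_pairsIn (Y : Finset V) : #(pairsIn Y) = (#Y).choose 2 :=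
  Sym2.card_image_offDiag Y

lemma pairsIn_subset_edgeFinset_top [Fintype V] (Y : Finset V) :
    pairsIn Y ⊆ (⊤ : SimpleGraph V).edgeFinset := by
  intro e he
  induction e with
  | _ u v => simpa using (mk_mem_pairsIn.1 he).2.2

end Pairs

/-- The vertex set `Y` spans at least `κ|Y|` edges of `G`: the witness that a random graph fails to
expand. -/
def IsDenseOn {V : Type*} [Fintype V] [DecidableEq V] (κ : ℝ) (G : SimpleGraph V) (Y : Finset V) :
    Prop :=
  κ * #Y ≤ #(G.edgeFinset ∩ pairsIn Y)

section DenseSets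

variable {V : Type*} [Fintype V] [DecidableEq V]

lemma measureReal_isDenseOn_le (p : I) {Y : Finset V}
    {b κ ρ s : ℝ} (hY : #Y ≤ b) (hpb : p * b ≤ 2 * κ * ρ) (hs : 0 ≤ s) :
    G(V, p).real {G | IsDenseOn κ G Y} ≤
      Real.exp (-(κ * (s - ρ * (Real.exp s - 1)))) ^ #Y := by
  have hpairs : ((#Y).choose 2 : ℝ) * p ≤ κ * ρ * #Y := by
    have hp := p.2.1
    calc ((#Y).choose 2 : ℝ) * p ≤ (#Y * b / 2) * p := by
          rw [Nat.cast_choose_two]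
          gcongr
          linarith
      _ = #Y * (p * b) / 2 := by ring
      _ ≤ #Y * (2 * κ * ρ) / 2 := by gcongr
      _ = κ * ρ * #Y := by ring
  have hexp : 0 ≤ Real.exp s - 1 := sub_nonneg.2 (Real.one_le_exp hs)
  refine (measureReal_le_card_edgeFinset_inter_le p (pairsIn_subset_edgeFinset_top Y) hs _).trans ?_
  rw [card_pairsIn, ← Real.exp_nat_mul, Real.exp_le_exp]
  linarith [mul_le_mul_of_nonneg_right hpairs hexp]

omit [DecidableEq V] in
lemma sum_nonempty_pow_card_le {q : ℝ} (hq : 0 ≤ q) :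
    ∑ Y : Finset V with Y.Nonempty, q ^ #Y ≤ Real.exp (Fintype.card V * q) - 1 := by
  have hsplit : ∑ Y : Finset V with Y.Nonempty, q ^ #Y + 1 = (q + 1) ^ Fintype.card V := by
    rw [← Fintype.sum_pow_mul_eq_add_pow V q 1,
      ← Finset.sum_filter_add_sum_filter_not Finset.univ Finset.Nonempty]
    simp [Finset.filter_eq']
  have hexp : (q + 1) ^ Fintype.card V ≤ Real.exp (Fintype.card V * q) := by
    rw [Real.exp_nat_mul]
    gcongr
    exact Real.add_one_le_exp q
  linarith

lemma measureReal_exists_isDenseOn_le (p : I) {b κ ρ s : ℝ} (hpb : p * b ≤ 2 * κ * ρ) (hs : 0 ≤ s) :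
    G(V, p).real {G | ∃ Y : Finset V, Y.Nonempty ∧ #Y ≤ b ∧ IsDenseOn κ G Y} ≤
      Real.exp (Fintype.card V * Real.exp (-(κ * (s - ρ * (Real.exp s - 1))))) - 1 := by
  set q := Real.exp (-(κ * (s - ρ * (Real.exp s - 1))))
  let small : Finset (Finset V) := {Y | Y.Nonempty ∧ #Y ≤ b}
  calc G(V, p).real {G | ∃ Y : Finset V, Y.Nonempty ∧ #Y ≤ b ∧ IsDenseOn κ G Y}
      = G(V, p).real (⋃ Y ∈ small, {G | IsDenseOn κ G Y}) := by
        congr 1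
        ext G
        simp [small, and_assoc]
    _ ≤ ∑ Y ∈ small, G(V, p).real {G | IsDenseOn κ G Y} :=
        measureReal_biUnion_finset_le _ _
    _ ≤ ∑ Y ∈ small, q ^ #Y := Finset.sum_le_sum fun Y hY =>
        measureReal_isDenseOn_le p (Finset.mem_filter.1 hY).2.2 hpb hs
    _ ≤ ∑ Y : Finset V with Y.Nonempty, q ^ #Y :=
        Finset.sum_le_sum_of_subset_of_nonneg (Finset.monotone_filter_right _ fun _ _ => And.left)
          fun _ _ _ => by positivity
    _ ≤ Real.exp (Fintype.card V * q) - 1 := sum_nonempty_pow_card_le (Real.exp_nonneg _)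

end DenseSets

/-- Every subgraph of `G` of minimum degree at least `d` expands vertex sets of size at most `m` by
the factor `r`. The theorem is about the case `d = ε'np`, `m = (ε'/80)n` and `r = 2`. -/
def MinDegreeSubgraphsExpand {V : Type} (d m r : ℝ) (G : SimpleGraph V) : Prop :=
  ∀ G' : SimpleGraph V, G' ≤ G → (∀ v, d ≤ ((G'.neighborSet v).ncard : ℝ)) →
    ∀ X : Finset V, (X.card : ℝ) ≤ m →
      r * (X.card : ℝ) ≤ ((setNbhd G' X \ (X : Set V)).ncard : ℝ)

section Expansion

variable {V : Type} [Fintype V] [DecidableEq V]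

lemma totalDeg_le_two_mul_card_edgeFinset_inter_pairsIn (G : SimpleGraph V) {X Y : Finset V}
    (hXY : X ⊆ Y) (hN : setNbhd G X ⊆ Y) :
    totalDeg G X ≤ 2 * #(G.edgeFinset ∩ pairsIn Y) := by
  let H : SimpleGraph V := .fromEdgeSet (G.edgeFinset ∩ pairsIn Y : Finset (Sym2 V))
  have hdegree : ∀ v ∈ X, (G.neighborSet v).ncard ≤ H.degree v := by
    intro v hv
    rw [← SimpleGraph.card_neighborFinset_eq_degree, ← Set.ncard_coe_finset,
      SimpleGraph.coe_neighborFinset]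
    refine Set.ncard_le_ncard fun u huv => ?_
    have huv' : G.Adj v u := huv
    have huY : u ∈ Y := hN ⟨v, hv, huv'⟩
    simp [H, mk_mem_pairsIn, huv', huv'.ne, hXY hv, huY]
  have hsum : ∑ v, H.degree v ≤ 2 * #(G.edgeFinset ∩ pairsIn Y) := by
    rw [H.sum_degrees_eq_twice_card_edges]
    gcongr
    rw [← Finset.coe_subset, SimpleGraph.coe_edgeFinset, SimpleGraph.edgeSet_fromEdgeSet]
    exact Set.sdiff_subset
  have hnat : ∑ v ∈ X, (G.neighborSet v).ncard ≤ 2 * #(G.edgeFinset ∩ pairsIn Y) :=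
    calc ∑ v ∈ X, (G.neighborSet v).ncard ≤ ∑ v ∈ X, H.degree v := Finset.sum_le_sum hdegree
      _ ≤ ∑ v, H.degree v := Finset.sum_le_sum_of_subset X.subset_univ
      _ ≤ 2 * #(G.edgeFinset ∩ pairsIn Y) := hsum
  rw [totalDeg]
  exact_mod_cast hnat

lemma exists_isDenseOn_of_not_minDegreeSubgraphsExpand {G : SimpleGraph V} {d m r : ℝ} (hd : 0 ≤ d)
    (hr : 0 ≤ r) (hG : ¬ MinDegreeSubgraphsExpand d m r G) :
    ∃ Y : Finset V, Y.Nonempty ∧ #Y ≤ (1 + r) * m ∧ IsDenseOn (d / (2 * (1 + r))) G Y := by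
  simp only [MinDegreeSubgraphsExpand, not_forall, not_le] at hG
  obtain ⟨G', hle, hdeg, X, hXm, hX⟩ := hG
  let N : Finset V := (setNbhd G' X \ (X : Set V)).toFinset
  have hNX : (#N : ℝ) < r * #X := by rwa [← Set.ncard_eq_toFinset_card']
  have hXne : X.Nonempty := Finset.card_pos.1 <| Nat.cast_pos.1 <|
    pos_of_mul_pos_right ((Nat.cast_nonneg _).trans_lt hNX) hr
  have hcard : (#(X ∪ N) : ℝ) ≤ (1 + r) * #X := by
    have hunion : (#(X ∪ N) : ℝ) ≤ #X + #N := mod_cast Finset.card_union_le X N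
    linarith
  refine ⟨X ∪ N, hXne.mono Finset.subset_union_left, hcard.trans (by gcongr), ?_⟩
  have hN : setNbhd G' X ⊆ ↑(X ∪ N) := by
    intro u hu
    by_cases huX : u ∈ X <;> simp [N, hu, huX]
  calc d / (2 * (1 + r)) * #(X ∪ N) ≤ d / (2 * (1 + r)) * ((1 + r) * #X) := by gcongr
    _ = #X * d / 2 := by field_simp
    _ ≤ totalDeg G' X / 2 := by
        gcongr
        rw [totalDeg, ← nsmul_eq_mul]
        exact Finset.card_nsmul_le_sum X _ d fun v _ => hdeg v
    _ ≤ #(G'.edgeFinset ∩ pairsIn (X ∪ N)) := by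
        linarith [totalDeg_le_two_mul_card_edgeFinset_inter_pairsIn G' Finset.subset_union_left hN]
    _ ≤ #(G.edgeFinset ∩ pairsIn (X ∪ N)) := by gcongr

lemma le_gnpProb_minDegreeSubgraphsExpand (p : I) {d m r ρ s : ℝ} (hd : 0 ≤ d) (hr : 0 ≤ r)
    (hρ : (1 + r) ^ 2 * m * p ≤ ρ * d) (hs : 0 ≤ s) :
    1 - (Real.exp (Fintype.card V *
        Real.exp (-(d / (2 * (1 + r)) * (s - ρ * (Real.exp s - 1))))) - 1) ≤
      gnpProb V p (MinDegreeSubgraphsExpand d m r) := by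
  have hpb : p * ((1 + r) * m) ≤ 2 * (d / (2 * (1 + r))) * ρ := by
    rw [show 2 * (d / (2 * (1 + r))) * ρ = ρ * d / (1 + r) by field_simp, le_div_iff₀ (by linarith)]
    linarith
  have hfail : G(V, p).real {G | MinDegreeSubgraphsExpand d m r G}ᶜ ≤ _ :=
    (measureReal_mono fun _ => exists_isDenseOn_of_not_minDegreeSubgraphsExpand hd hr).trans
      (measureReal_exists_isDenseOn_le p hpb hs)
  rw [probReal_compl_eq_one_sub .of_discrete] at hfail
  rw [gnpProb_eq_measureReal]
  linarith

end Expansion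

lemma exists_nonneg_mul_exp_sub_one_lt {ρ : ℝ} (hρ : ρ < 1) :
    ∃ s, 0 ≤ s ∧ ρ * (Real.exp s - 1) < s := by
  obtain ⟨τ, hρτ, hτ0, hτ1⟩ : ∃ τ, ρ ≤ τ ∧ 0 < τ ∧ τ < 1 :=
    ⟨max ρ (1 / 2), le_max_left _ _, by positivity, max_lt hρ (by norm_num)⟩
  -- `-log τ` minimises `s ↦ τ * (exp s - 1) - s`.
  have hs : 0 ≤ -Real.log τ := neg_nonneg.2 (Real.log_nonpos hτ0.le hτ1.le)
  refine ⟨-Real.log τ, hs, ?_⟩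
  calc ρ * (Real.exp (-Real.log τ) - 1) ≤ τ * (Real.exp (-Real.log τ) - 1) := by
        gcongr
        exact sub_nonneg.2 (Real.one_le_exp hs)
    _ = 1 - τ := by rw [Real.exp_neg, Real.exp_log hτ0]; field_simp
    _ < -Real.log τ := by linarith [Real.log_lt_sub_one_of_pos hτ0 hτ1.ne]

lemma tendsto_natCast_mul_exp_neg {f : ℕ → ℝ} (hf : ∀ᶠ n in atTop, 0 ≤ f n)
    (hlog : (fun n : ℕ => Real.log n) =o[atTop] f) :
    Tendsto (fun n : ℕ => n * Real.exp (-f n)) atTop (𝓝 0) := by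
  refine squeeze_zero' (.of_forall fun n => by positivity) ?_ tendsto_inv_atTop_nhds_zero_nat
  filter_upwards [hf, hlog.bound one_half_pos, eventually_gt_atTop 0] with n hfn hlogn hn
  have hn' : (0 : ℝ) < n := by exact_mod_cast hn
  rw [Real.norm_of_nonneg (Real.log_natCast_nonneg n), Real.norm_of_nonneg hfn] at hlogn
  calc n * Real.exp (-f n) = Real.exp (Real.log n - f n) := by
        rw [sub_eq_add_neg, Real.exp_add, Real.exp_log hn']
    _ ≤ Real.exp (-Real.log n) := Real.exp_le_exp.2 (by linarith)
    _ = (n : ℝ)⁻¹ := by rw [Real.exp_neg, Real.exp_log hn']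

lemma eventually_mul_rpow_neg_mem_unitInterval {C a : ℝ} (hC : 0 ≤ C) (ha : 0 < a) :
    ∀ᶠ n : ℕ in atTop, C * (n : ℝ) ^ (-a) ∈ I := by
  have hlim : Tendsto (fun n : ℕ => C * (n : ℝ) ^ (-a)) atTop (𝓝 0) := by
    simpa using ((tendsto_rpow_neg_atTop ha).comp tendsto_natCast_atTop_atTop).const_mul C
  filter_upwards [hlim.eventually_le_const one_pos] with n hn
  exact ⟨by positivity, hn⟩

lemma isLittleO_log_natCast_mul_rpow_neg {C a : ℝ} (hC : C ≠ 0) (ha : a < 1) :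
    (fun n : ℕ => Real.log n) =o[atTop] fun n : ℕ => (n : ℝ) * (C * (n : ℝ) ^ (-a)) := by
  refine (((isLittleO_log_rpow_atTop (sub_pos.2 ha)).comp_tendsto
    tendsto_natCast_atTop_atTop).const_mul_right hC).congr' .rfl ?_
  filter_upwards [eventually_gt_atTop 0] with n hn
  have hn' : (0 : ℝ) < n := by exact_mod_cast hn
  rw [Function.comp_apply, sub_eq_add_neg, Real.rpow_add hn', Real.rpow_one]
  ring

theorem min_degree_subgraph_expands_general {p : ℕ → ℝ} {ε' δ r : ℝ} (hε' : 0 < ε') (hr : 0 ≤ r)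
    (hδ : (1 + r) ^ 2 * δ < ε') (hp : ∀ᶠ n in atTop, p n ∈ I)
    (hlog : (fun n : ℕ => Real.log n) =o[atTop] fun n => n * p n) :
    Tendsto (fun n : ℕ => gnpProb (Fin n) (p n)
      (MinDegreeSubgraphsExpand (ε' * n * p n) (δ * n) r)) atTop (𝓝 1) := by
  obtain ⟨s, hs, hlt⟩ := exists_nonneg_mul_exp_sub_one_lt ((div_lt_one hε').2 hδ)
  set ρ := (1 + r) ^ 2 * δ / ε' with hρ
  set c := ε' / (2 * (1 + r)) * (s - ρ * (Real.exp s - 1)) with hc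
  have hc0 : 0 < c := mul_pos (by positivity) (sub_pos.2 hlt)
  have hunion : Tendsto (fun n : ℕ => n * Real.exp (-(c * (n * p n)))) atTop (𝓝 0) := by
    refine tendsto_natCast_mul_exp_neg ?_ (hlog.const_mul_right hc0.ne')
    filter_upwards [hp] with n hpn
    have := hpn.1
    positivity
  have hbound : Tendsto (fun n : ℕ => 1 - (Real.exp (n * Real.exp (-(c * (n * p n)))) - 1)) atTop
      (𝓝 1) := by
    simpa using (((Real.continuous_exp.tendsto 0).comp hunion).sub_const 1).const_sub 1
  refine tendsto_of_tendsto_of_tendsto_of_le_of_le' hbound tendsto_const_nhds ?_ ?_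
  · filter_upwards [hp] with n hpn
    have hd : 0 ≤ ε' * n * p n := mul_nonneg (by positivity) hpn.1
    have hle := le_gnpProb_minDegreeSubgraphsExpand (V := Fin n) ⟨p n, hpn⟩ hd hr (m := δ * n)
      (ρ := ρ) (le_of_eq (by rw [hρ]; field_simp)) hs
    rw [Fintype.card_fin] at hle
    refine le_of_eq_of_le ?_ hle
    rw [hc]
    ring_nf
  · filter_upwards [hp] with n hpn
    exact gnpProb_le_one ⟨p n, hpn⟩ _

/-- Expansion lemma: if p = C·n^(-1/2) with C > 0 and ε' > 0, then a.a.s. every subgraph G'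
of G(n,p) with minimum degree at least ε'np satisfies: every vertex set X with
|X| ≤ (ε'/80)n has |N_{G'}(X) ∖ X| ≥ 2|X|. -/
theorem min_degree_subgraph_expands (C : ℝ) (hC : 0 < C) (ε' : ℝ) (hε' : 0 < ε') :
    Filter.Tendsto
      (fun n : ℕ =>
        gnpProb (Fin n) (C * (n : ℝ) ^ (-(1/2) : ℝ)) (fun G =>
          ∀ G' : SimpleGraph (Fin n), G' ≤ G →
            (∀ v : Fin n,
              ε' * n * (C * (n : ℝ) ^ (-(1/2) : ℝ)) ≤ ((G'.neighborSet v).ncard : ℝ)) →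
            ∀ X : Finset (Fin n), (X.card : ℝ) ≤ ε' / 80 * n →
              2 * (X.card : ℝ) ≤ ((setNbhd G' X \ (X : Set (Fin n))).ncard : ℝ)))
      Filter.atTop (nhds 1) :=
  min_degree_subgraph_expands_general hε' zero_le_two (by linarith)
    (eventually_mul_rpow_neg_mem_unitInterval hC.le one_half_pos)
    (isLittleO_log_natCast_mul_rpow_neg hC.ne' one_half_lt_one)
end

section
/- For every integer l with 0 ≤ l ≤ n/2 and every l-shortcut X in K_n ∖ C_n, the graph C_n ∪ X contains a cycle of length l + 8 and a cycle of length n − l. -/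
/-!
The eight ends of the shortcut cut `C_n` into eight arcs. Taking every second one gives two
families of four arcs, each covering all eight ends, so the four shortcut edges link the arcs of
either family to one another; in both types of shortcut, and for both families, the result is a
single cycle. One family consists of the three edges `{iⱼ, iⱼ + 1}` with `j ≤ 3` and the arc of
length `l + 1` from `i₄`, which makes a cycle of length `(l + 4) + 4`. The arcs of the other family
have total length `n - (l + 4)`, which makes a cycle of length `n - l`.
-/

open Filter Topology Classical

/-- The clockwise arc length from `a` to `b` on the discrete circle `ZMod n`. -/
def arcDist {n : ℕ} (a b : ZMod n) : ℕ := (b - a).val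

/-- The points of `L` are all distinct and lie in this clockwise cyclic order
on the discrete circle `ZMod n` (the consecutive clockwise arcs, including the
wrap-around arc, sum to exactly `n`). -/
def InClockwiseOrder {n : ℕ} (L : List (ZMod n)) : Prop :=
  L.Nodup ∧ ((L.zip (L.rotate 1)).map fun q => arcDist q.1 q.2).sum = n

/-- The Hamilton cycle `C_n` on vertex set `ZMod n`, with edges `{i, i+1}`. -/
def cycleGraph (n : ℕ) : SimpleGraph (ZMod n) :=
  SimpleGraph.fromEdgeSet {e | ∃ i : ZMod n, e = s(i, i + 1)}

/-- The four edges of the `l`-shortcut determined by `i₁ i₂ i₃ i₄`. -/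
def shortcutEdges {n : ℕ} (l : ℕ) (i₁ i₂ i₃ i₄ : ZMod n) : Finset (Sym2 (ZMod n)) :=
  {s(i₁, i₃), s(i₁ + 1, i₄), s(i₂, i₄ + (l : ZMod n) + 1), s(i₂ + 1, i₃ + 1)}

/-- `(i₁, i₂, i₃, i₄)` determines an `l`-shortcut (of type (i) or type (ii)) in `K_n ∖ C_n`. -/
def IsShortcutTuple {n : ℕ} (l : ℕ) (i₁ i₂ i₃ i₄ : ZMod n) : Prop :=
  (InClockwiseOrder [i₁, i₁ + 1, i₂, i₂ + 1, i₃, i₃ + 1, i₄, i₄ + (l : ZMod n) + 1] ∨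
   InClockwiseOrder [i₁, i₁ + 1, i₂, i₂ + 1, i₄, i₄ + (l : ZMod n) + 1, i₃, i₃ + 1]) ∧
  ∀ e ∈ shortcutEdges l i₁ i₂ i₃ i₄, e ∉ (cycleGraph n).edgeSet

/-- The edge set `S` is an `l`-shortcut. -/
def IsShortcut {n : ℕ} (l : ℕ) (S : Finset (Sym2 (ZMod n))) : Prop :=
  ∃ i₁ i₂ i₃ i₄ : ZMod n, IsShortcutTuple l i₁ i₂ i₃ i₄ ∧ S = shortcutEdges l i₁ i₂ i₃ i₄

/-- The number of `l`-shortcuts all of whose edges belong to the edge set `U`. -/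
noncomputable def shortcutCountIn {n : ℕ} (l : ℕ) (U : Set (Sym2 (ZMod n))) : ℕ :=
  {S : Finset (Sym2 (ZMod n)) | IsShortcut l S ∧ (S : Set (Sym2 (ZMod n))) ⊆ U}.ncard

/-- `G` contains an `l`-shortcut. -/
def ContainsShortcut {n : ℕ} (l : ℕ) (G : SimpleGraph (ZMod n)) : Prop :=
  ∃ i₁ i₂ i₃ i₄ : ZMod n, IsShortcutTuple l i₁ i₂ i₃ i₄ ∧
    (shortcutEdges l i₁ i₂ i₃ i₄ : Set (Sym2 (ZMod n))) ⊆ G.edgeSet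

/-- `G` contains a cycle of length `t`. -/
def HasCycleLength {V : Type} (G : SimpleGraph V) (t : ℕ) : Prop :=
  ∃ (v : V) (w : G.Walk v v), w.IsCycle ∧ w.length = t

lemma exists_walk_support_eq_map_Ico {V : Type*} {G : SimpleGraph V} {f : ℕ → V}
    (hf : ∀ k, G.Adj (f k) (f (k + 1))) {u v : ℕ} (huv : u ≤ v) :
    ∃ p : G.Walk (f u) (f v), p.support = (List.Ico u (v + 1)).map f := by
  induction v, huv using Nat.le_induction with
  | base => exact ⟨.nil, by simp⟩
  | succ v huv ih =>
    obtain ⟨p, hp⟩ := ih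
    exact ⟨p.concat (hf v), by
      simp [SimpleGraph.Walk.support_concat, hp, List.Ico.succ_top (show u ≤ v + 1 by lia)]⟩

lemma hasCycleLength_of_four_walks {V : Type} {G : SimpleGraph V} {a a' b b' c c' d d' : V}
    {p : G.Walk a a'} {q : G.Walk b b'} {r : G.Walk c c'} {s : G.Walk d d'}
    (hpq : G.Adj a' b) (hqr : G.Adj b' c) (hrs : G.Adj c' d) (hsp : G.Adj d' a)
    (hnodup : (p.support ++ q.support ++ r.support ++ s.support).Nodup) :
    HasCycleLength G (p.length + q.length + r.length + s.length + 4) := by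
  refine ⟨d', .cons hsp (p.append (.cons hpq (q.append (.cons hqr (r.append (.cons hrs s)))))),
    SimpleGraph.Walk.isCycle_iff_isPath_tail_and_le_length.2 ⟨?_, ?_⟩, ?_⟩
  · simpa [SimpleGraph.Walk.isPath_def, SimpleGraph.Walk.support_append] using hnodup
  all_goals
    simp only [SimpleGraph.Walk.length_cons, SimpleGraph.Walk.length_append]
    lia

-- In each cycle needed here exactly one arc is run through backwards; it is listed last.
lemma hasCycleLength_of_four_arcs {V : Type} {G : SimpleGraph V} {f : ℕ → V}
    (hf : ∀ k, G.Adj (f k) (f (k + 1))) {u₁ v₁ u₂ v₂ u₃ v₃ u₄ v₄ : ℕ}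
    (h₁ : u₁ ≤ v₁) (h₂ : u₂ ≤ v₂) (h₃ : u₃ ≤ v₃) (h₄ : u₄ ≤ v₄)
    (h₁₂ : G.Adj (f v₁) (f u₂)) (h₂₃ : G.Adj (f v₂) (f u₃))
    (h₃₄ : G.Adj (f v₃) (f v₄)) (h₄₁ : G.Adj (f u₄) (f u₁))
    (hnodup : ((List.Ico u₁ (v₁ + 1) ++ List.Ico u₂ (v₂ + 1) ++ List.Ico u₃ (v₃ + 1) ++
      List.Ico u₄ (v₄ + 1)).map f).Nodup) :
    HasCycleLength G ((v₁ - u₁) + (v₂ - u₂) + (v₃ - u₃) + (v₄ - u₄) + 4) := by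
  obtain ⟨p₁, hp₁⟩ := exists_walk_support_eq_map_Ico hf h₁
  obtain ⟨p₂, hp₂⟩ := exists_walk_support_eq_map_Ico hf h₂
  obtain ⟨p₃, hp₃⟩ := exists_walk_support_eq_map_Ico hf h₃
  obtain ⟨p₄, hp₄⟩ := exists_walk_support_eq_map_Ico hf h₄
  have hlen {u v : ℕ} (huv : u ≤ v) {p : G.Walk (f u) (f v)}
      (hp : p.support = (List.Ico u (v + 1)).map f) : p.length = v - u := by
    have := congrArg List.length hp
    simp only [SimpleGraph.Walk.length_support, List.length_map, List.Ico.length] at this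
    lia
  have hcycle := hasCycleLength_of_four_walks (p := p₁) (q := p₂) (r := p₃) (s := p₄.reverse)
    h₁₂ h₂₃ h₃₄ h₄₁ (by
      rw [hp₁, hp₂, hp₃, SimpleGraph.Walk.support_reverse, hp₄, ← List.map_append,
        ← List.map_append]
      rw [List.map_append] at hnodup
      exact ((List.reverse_perm _).append_left _).nodup_iff.2 hnodup)
  rwa [SimpleGraph.Walk.length_reverse, hlen h₁ hp₁, hlen h₂ hp₂, hlen h₃ hp₃,
    hlen h₄ hp₄] at hcycle

section ArcDist

variable {n : ℕ} {x y z : ZMod n}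

lemma arcDist_pos (h : x ≠ y) : 0 < arcDist x y := by
  rw [arcDist, Nat.pos_iff_ne_zero, Ne, ZMod.val_eq_zero, sub_eq_zero]
  exact h.symm

lemma arcDist_triangle (x y z : ZMod n) : arcDist x z ≤ arcDist x y + arcDist y z := by
  rw [arcDist, ← sub_add_sub_cancel' y x z]
  exact ZMod.val_add_le _ _

lemma arcDist_eq_add_of_lt (h : arcDist x y + arcDist y z < n) :
    arcDist x z = arcDist x y + arcDist y z := by
  rw [arcDist, ← sub_add_sub_cancel' y x z]
  exact ZMod.val_add_of_lt h

lemma add_arcDist [NeZero n] (x y : ZMod n) : x + (arcDist x y : ZMod n) = y := by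
  simp [arcDist]

lemma arcDist_add_natCast [NeZero n] {k : ℕ} (hk : k ≤ n)
    (h : arcDist x y < arcDist x (y + k)) : arcDist x (y + k) = arcDist x y + k := by
  have hmod : arcDist x (y + k) = (arcDist x y + k) % n := by
    rw [← ZMod.val_natCast, Nat.cast_add, eq_sub_of_add_eq' (add_arcDist x y), arcDist,
      sub_add_eq_add_sub]
  rw [hmod] at h ⊢
  -- Stepping over `x` with `k ≤ n` steps would not increase the distance from `x`.
  refine Nat.mod_eq_of_lt (lt_of_not_ge fun hge => ?_)
  have := Nat.mod_eq_sub_mod hge ▸ Nat.mod_le (arcDist x y + k - n) n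
  lia

lemma arcDist_add_one [NeZero n] (h : arcDist x y < arcDist x (y + 1)) :
    arcDist x (y + 1) = arcDist x y + 1 := by
  simpa using arcDist_add_natCast (k := 1) NeZero.one_le (by simpa using h)

lemma arcDist_le_sum (x y : ZMod n) (L : List (ZMod n)) :
    arcDist y x ≤ (((y :: L).zip (L ++ [x])).map fun q => arcDist q.1 q.2).sum := by
  induction L generalizing y with
  | nil => simp
  | cons z L ih => simpa using (arcDist_triangle y z x).trans (Nat.add_le_add_left (ih z) _)

-- The arcs sum to at most `n`, so the triangle inequality for the distances from `x` is sharp.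
lemma isChain_map_arcDist_of_sum_le {L : List (ZMod n)} (hx : x ∉ L) (hL : (y :: L).Nodup)
    (hsum : arcDist x y + (((y :: L).zip (L ++ [x])).map fun q => arcDist q.1 q.2).sum ≤ n) :
    ((y :: L).map (arcDist x)).IsChain (· < ·) := by
  induction L generalizing y with
  | nil => simp
  | cons z L ih =>
    simp only [List.mem_cons, not_or] at hx
    simp only [List.cons_append, List.zip_cons_cons, List.map_cons, List.sum_cons] at hsum
    have hyz : 0 < arcDist y z := arcDist_pos (List.ne_of_not_mem_cons hL.notMem)
    have hzx : 0 < arcDist z x := arcDist_pos (Ne.symm hx.1)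
    have hrest := arcDist_le_sum x z L
    have hxz : arcDist x z = arcDist x y + arcDist y z := arcDist_eq_add_of_lt (by lia)
    exact .cons_cons (by lia) (ih hx.2 hL.of_cons (by lia))

lemma InClockwiseOrder.isChain_map_arcDist {L : List (ZMod n)} (h : InClockwiseOrder (x :: L)) :
    ((x :: L).map (arcDist x)).IsChain (· < ·) :=
  isChain_map_arcDist_of_sum_le h.1.notMem h.1 (by simpa [arcDist] using h.2.le)

lemma InClockwiseOrder.pos {L : List (ZMod n)} (h : InClockwiseOrder (x :: y :: L)) : 0 < n := by
  have hsum := h.2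
  have hxy : 0 < arcDist x y := arcDist_pos (List.ne_of_not_mem_cons h.1.notMem)
  simp only [List.rotate_cons_succ, List.rotate_zero, List.cons_append, List.zip_cons_cons,
    List.map_cons, List.sum_cons] at hsum
  lia

end ArcDist

section Shortcut

variable {n l : ℕ} {i₁ i₂ i₃ i₄ : ZMod n}

lemma IsShortcutTuple.pos (h : IsShortcutTuple l i₁ i₂ i₃ i₄) : 0 < n :=
  h.1.elim InClockwiseOrder.pos InClockwiseOrder.pos

lemma IsShortcut.pos {S : Finset (Sym2 (ZMod n))} (h : IsShortcut l S) : 0 < n :=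
  have ⟨_, _, _, _, h, _⟩ := h
  h.pos

lemma IsShortcutTuple.exists_positions (hl : l < n) (h : IsShortcutTuple l i₁ i₂ i₃ i₄) :
    ∃ a b c : ℕ, i₂ = i₁ + a ∧ i₃ = i₁ + b ∧ i₄ = i₁ + c ∧ 1 < a ∧
      (a + 1 < b ∧ b + 1 < c ∧ c + l + 1 < n ∨ a + 1 < c ∧ c + l + 1 < b ∧ b + 1 < n) := by
  have : NeZero n := ⟨h.pos.ne'⟩
  refine ⟨arcDist i₁ i₂, arcDist i₁ i₃, arcDist i₁ i₄, (add_arcDist _ _).symm,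
    (add_arcDist _ _).symm, (add_arcDist _ _).symm, ?_⟩
  have hself : arcDist i₁ i₁ = 0 := by simp [arcDist]
  have harc : arcDist i₁ i₄ < arcDist i₁ (i₄ + l + 1) →
      arcDist i₁ (i₄ + l + 1) = arcDist i₁ i₄ + l + 1 := by
    simpa [add_assoc] using arcDist_add_natCast (x := i₁) (y := i₄) (Nat.succ_le_of_lt hl)
  have hlt (y : ZMod n) : arcDist i₁ y < n := ZMod.val_lt _
  rcases h.1 with horder | horder
  all_goals
    have hchain := horder.isChain_map_arcDist
    simp only [List.map_cons, List.map_nil, List.isChain_cons_cons] at hchain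
    grind [arcDist_add_one]

lemma IsShortcutTuple.adj (h : IsShortcutTuple l i₁ i₂ i₃ i₄) {G : SimpleGraph (ZMod n)}
    (hG : SimpleGraph.fromEdgeSet (shortcutEdges l i₁ i₂ i₃ i₄) ≤ G) :
    G.Adj i₁ i₃ ∧ G.Adj (i₁ + 1) i₄ ∧ G.Adj i₂ (i₄ + l + 1) ∧ G.Adj (i₂ + 1) (i₃ + 1) := by
  have hne : i₁ ≠ i₃ ∧ i₁ + 1 ≠ i₄ ∧ i₂ ≠ i₄ + l + 1 ∧ i₂ + 1 ≠ i₃ + 1 := by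
    rcases h.1 with horder | horder
    all_goals
      have hnodup := horder.1
      simp only [List.nodup_cons, List.mem_cons, not_or] at hnodup
      tauto
  refine ⟨hG ?_, hG ?_, hG ?_, hG ?_⟩ <;> simp [shortcutEdges, hne]

end Shortcut

/-- An `l`-shortcut read along the number line: `f` winds around a cycle of `G` once every `n`
steps, and the vertices `i₁`, `i₂`, `i₃`, `i₄` sit at the positions `0`, `a`, `b`, `c`. The two
alternatives of `order` are the types (i) and (ii) of shortcuts. -/
structure IsUnrolledShortcut {V : Type*} (G : SimpleGraph V) (f : ℕ → V) (n l a b c : ℕ) :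
    Prop where
  adj_succ (k : ℕ) : G.Adj (f k) (f (k + 1))
  injOn_Ico (m : ℕ) : Set.InjOn f (Set.Ico m (m + n))
  period : f n = f 0
  chord₁ : G.Adj (f 0) (f b)
  chord₂ : G.Adj (f 1) (f c)
  chord₃ : G.Adj (f a) (f (c + l + 1))
  chord₄ : G.Adj (f (a + 1)) (f (b + 1))
  one_lt : 1 < a
  order : a + 1 < b ∧ b + 1 < c ∧ c + l + 1 < n ∨ a + 1 < c ∧ c + l + 1 < b ∧ b + 1 < n

namespace IsUnrolledShortcut

variable {V : Type} {G : SimpleGraph V} {f : ℕ → V} {n l a b c : ℕ}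

lemma nodup_map (h : IsUnrolledShortcut G f n l a b c) {L : List ℕ} (hL : L.Nodup) (m : ℕ)
    (hm : ∀ k ∈ L, m ≤ k ∧ k < m + n) : (L.map f).Nodup :=
  hL.map_on fun j hj k hk => h.injOn_Ico m (hm j hj) (hm k hk)

lemma hasCycleLength_add_eight (h : IsUnrolledShortcut G f n l a b c) :
    HasCycleLength G (l + 8) := by
  have hle : c ≤ c + l + 1 := by lia
  have hnodup : (List.Ico 0 (1 + 1) ++ List.Ico c (c + l + 1 + 1) ++ List.Ico a (a + 1 + 1) ++
      List.Ico b (b + 1 + 1)).Nodup := by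
    grind [h.one_lt, h.order, List.Ico.nodup, List.Ico.mem]
  convert hasCycleLength_of_four_arcs h.adj_succ zero_le_one hle a.le_succ b.le_succ
    h.chord₂ h.chord₃.symm h.chord₄ h.chord₁.symm (h.nodup_map hnodup 0 ?_) using 1
  · lia
  · grind [h.one_lt, h.order, List.Ico.mem]

lemma hasCycleLength_sub (h : IsUnrolledShortcut G f n l a b c) : HasCycleLength G (n - l) := by
  have ha := h.one_lt
  have hchord₁ : G.Adj (f n) (f b) := h.period ▸ h.chord₁
  rcases h.order with typeI | typeII
  · have hnodup : (List.Ico (b + 1) (c + 1) ++ List.Ico 1 (a + 1) ++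
        List.Ico (c + l + 1) (n + 1) ++ List.Ico (a + 1) (b + 1)).Nodup := by
      grind [List.Ico.nodup, List.Ico.mem]
    convert hasCycleLength_of_four_arcs h.adj_succ (by lia) (by lia) (by lia) (by lia)
      h.chord₂.symm h.chord₃ hchord₁ h.chord₄ (h.nodup_map hnodup 1 ?_) using 1
    · lia
    · grind [List.Ico.mem]
  · have hnodup : (List.Ico (a + 1) (c + 1) ++ List.Ico 1 (a + 1) ++
        List.Ico (c + l + 1) (b + 1) ++ List.Ico (b + 1) (n + 1)).Nodup := by
      grind [List.Ico.nodup, List.Ico.mem]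
    convert hasCycleLength_of_four_arcs h.adj_succ (by lia) (by lia) (by lia) (by lia)
      h.chord₂.symm h.chord₃ hchord₁.symm h.chord₄.symm (h.nodup_map hnodup 1 ?_) using 1
    · lia
    · grind [List.Ico.mem]

end IsUnrolledShortcut

lemma injOn_add_natCast {n : ℕ} (x : ZMod n) (m : ℕ) :
    Set.InjOn (fun k : ℕ => x + k) (Set.Ico m (m + n)) := by
  intro j hj k hk hjk
  have hmod : j ≡ k [MOD n] := (ZMod.natCast_eq_natCast_iff j k n).1 (add_left_cancel hjk)
  exact hmod.eq_of_abs_lt (by grind)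

lemma cycleGraph_adj_add_one {n : ℕ} (hn : 1 < n) (x : ZMod n) :
    (cycleGraph n).Adj x (x + 1) := by
  have : Fact (1 < n) := ⟨hn⟩
  simp [cycleGraph]

lemma IsShortcutTuple.exists_isUnrolledShortcut {n l : ℕ} {i₁ i₂ i₃ i₄ : ZMod n}
    (hl : l < n) (h : IsShortcutTuple l i₁ i₂ i₃ i₄) :
    ∃ a b c : ℕ, IsUnrolledShortcut
      (cycleGraph n ⊔ SimpleGraph.fromEdgeSet (shortcutEdges l i₁ i₂ i₃ i₄))
      (fun k : ℕ => i₁ + k) n l a b c := by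
  obtain ⟨chord₁, chord₂, chord₃, chord₄⟩ := h.adj (le_sup_right (a := cycleGraph n))
  obtain ⟨a, b, c, rfl, rfl, rfl, ha, horder⟩ := h.exists_positions hl
  have hn : 1 < n := by lia
  refine ⟨a, b, c, fun k => .inl ?_, injOn_add_natCast i₁, by simp, by simpa using chord₁,
    by simpa using chord₂, by simpa [add_assoc] using chord₃, by simpa [add_assoc] using chord₄,
    ha, horder⟩
  simpa [add_assoc] using cycleGraph_adj_add_one hn (i₁ + (k : ZMod n))

theorem shortcut_gives_cycles_general {n l : ℕ} (hl : l < n) {S : Finset (Sym2 (ZMod n))}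
    (hS : IsShortcut l S) :
    HasCycleLength (cycleGraph n ⊔ SimpleGraph.fromEdgeSet (S : Set (Sym2 (ZMod n)))) (l + 8) ∧
    HasCycleLength (cycleGraph n ⊔ SimpleGraph.fromEdgeSet (S : Set (Sym2 (ZMod n)))) (n - l) := by
  obtain ⟨i₁, i₂, i₃, i₄, h, rfl⟩ := hS
  obtain ⟨a, b, c, hunrolled⟩ := h.exists_isUnrolledShortcut hl
  exact ⟨hunrolled.hasCycleLength_add_eight, hunrolled.hasCycleLength_sub⟩

/-- For every `l` with `0 ≤ l ≤ n/2` and every `l`-shortcut `X` in `K_n ∖ C_n`, the graph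
`C_n ∪ X` contains a cycle of length `l + 8` and a cycle of length `n − l`. -/
theorem shortcut_gives_cycles (n l : ℕ) (hl : 2 * l ≤ n)
    (S : Finset (Sym2 (ZMod n))) (hS : IsShortcut l S) :
    HasCycleLength (cycleGraph n ⊔ SimpleGraph.fromEdgeSet (S : Set (Sym2 (ZMod n)))) (l + 8) ∧
    HasCycleLength (cycleGraph n ⊔ SimpleGraph.fromEdgeSet (S : Set (Sym2 (ZMod n)))) (n - l) := by
  have hn : 0 < n := hS.pos
  exact shortcut_gives_cycles_general (by lia) hS
end

section
/- Let k be a positive integer and let G be a graph on n vertices with more than 90k·n^{1 + 1/k} edges. Then G contains a cycle of length 2k. -/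
/-!
Every graph has a bipartite subgraph with at least half of its edges, and if these are many, then it
has a connected subgraph of large minimum degree. Let `L i` be the set of the vertices of the latter
at distance `i` from a root, and suppose that it has no cycle of length `2 * k`.

For `i < k` at most `2 * k * (#(L i) + #(L (i + 1)))` edges join `L i` to `L (i + 1)`: otherwise
they contain a subgraph of minimum degree more than `2 * k`, and a longest path in it yields a cycle
with a chord on more than `2 * k` vertices. Take the least `m` such that all vertices of this cycle
in `L i` have the same ancestor `m + 1` steps up a breadth-first search tree. If two of them that
are joined by a path of length `2 * (k - (m + 1))` in the bipartite graph between the two layers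
have different ancestors `m` steps up, then this path and the two tree paths form a cycle of length
`2 * k`. If there are no such two, then the chord forces the `m`-th ancestor to be invariant under
translation by `2` along the cycle, hence to be the same for all its vertices in `L i`, against the
choice of `m`.

So the layers grow geometrically up to `L k`, by a factor exceeding the `k`-th root of the number of
vertices.
-/

open Filter Topology Classical

theorem HasCycleLength.map {V W : Type} {G : SimpleGraph V} {H : SimpleGraph W} {t : ℕ}
    (h : HasCycleLength G t) (f : G →g H) (hf : Function.Injective f) : HasCycleLength H t := by
  obtain ⟨v, w, hw, rfl⟩ := h
  exact ⟨f v, w.map f, (SimpleGraph.Walk.isCycle_map_iff_of_injective hf).2 hw, w.length_map f⟩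

theorem HasCycleLength.mono {V : Type} {G H : SimpleGraph V} {t : ℕ} (hGH : G ≤ H)
    (h : HasCycleLength G t) : HasCycleLength H t :=
  h.map (.ofLE hGH) Function.injective_id

/-! ### Chorded cycles -/

theorem eq_of_eqOn_Ico_of_periodic {α : Type*} {f g : ℤ → α} {p a : ℤ} (hp : 0 < p)
    (hf : Function.Periodic f p) (hg : Function.Periodic g p)
    (h : Set.EqOn f g (Set.Ico a (a + p))) : f = g := by
  funext x
  have hfg : Function.Periodic (fun z => (f z, g z)) p := fun z => Prod.ext (hf z) (hg z)
  obtain ⟨y, hy, hxy⟩ := hfg.exists_mem_Ico hp x a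
  rw [Prod.mk.injEq] at hxy
  rw [hxy.1, hxy.2, h hy]

theorem exists_isPath_of_seq {V : Type*} {G : SimpleGraph V} {q : ℕ → V} {l : ℕ}
    (hinj : Set.InjOn q (Set.Iic l)) (hadj : ∀ i < l, G.Adj (q i) (q (i + 1))) :
    ∃ p : G.Walk (q 0) (q l), p.IsPath ∧ p.length = l := by
  suffices ∃ p : G.Walk (q 0) (q l), p.support = (List.range (l + 1)).map q by
    obtain ⟨p, hp⟩ := this
    refine ⟨p, .mk' ?_, by simpa using congrArg List.length hp⟩
    rw [hp]
    refine List.Nodup.map_on (fun i hi j hj h => hinj ?_ ?_ h) List.nodup_range <;>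
      simp_all
  clear hinj
  induction l with
  | zero => exact ⟨.nil, by simp⟩
  | succ l ih =>
    obtain ⟨p, hp⟩ := ih fun i hi => hadj i (hi.trans l.lt_succ_self)
    refine ⟨p.concat (hadj l l.lt_succ_self), ?_⟩
    rw [SimpleGraph.Walk.support_concat, hp, List.range_succ (n := l + 1)]
    simp

/-- A cycle with a chord in `H`: a closed sequence of `length` distinct vertices, indexed
periodically by `ℤ`, together with a chord from vertex `0` to vertex `chord`. -/
structure ChordedCycle {V : Type*} (H : SimpleGraph V) where
  vertex : ℤ → V
  length : ℤ
  chord : ℤ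
  periodic : Function.Periodic vertex length
  dvd_sub_of_eq : ∀ {s t}, vertex s = vertex t → length ∣ s - t
  adj_succ : ∀ z, H.Adj (vertex z) (vertex (z + 1))
  adj_chord : H.Adj (vertex 0) (vertex chord)
  two_le_chord : 2 ≤ chord
  chord_add_two_le : chord + 2 ≤ length

namespace ChordedCycle

variable {V : Type*} {G H : SimpleGraph V}

/-- The chorded cycle `C` of `H`, regarded in a supergraph. -/
def mono (hHG : H ≤ G) (C : ChordedCycle H) : ChordedCycle G where
  __ := C
  adj_succ z := hHG (C.adj_succ z)
  adj_chord := hHG C.adj_chord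

/-- The chorded cycle `C` traversed backwards. This interchanges the two arcs cut off by the
chord. -/
def reverse (C : ChordedCycle H) : ChordedCycle H where
  vertex z := C.vertex (-z)
  length := C.length
  chord := C.length - C.chord
  periodic z := by simp only [neg_add, ← sub_eq_add_neg, C.periodic.sub_eq]
  dvd_sub_of_eq {s t} h := by
    have := C.dvd_sub_of_eq h
    rwa [neg_sub_neg, dvd_sub_comm] at this
  adj_succ z := by simpa using (C.adj_succ (-(z + 1))).symm
  adj_chord := by simpa [C.periodic.sub_eq] using C.adj_chord
  two_le_chord := by linarith [C.chord_add_two_le]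
  chord_add_two_le := by linarith [C.two_le_chord]

/-- `f` takes equal values at the two ends of every path of length `l` in `H` that joins vertices
of the cycle. -/
def IsPathInvariant {α : Type*} (C : ChordedCycle H) (f : V → α) (l : ℕ) : Prop :=
  ∀ s t (p : H.Walk (C.vertex s) (C.vertex t)), p.IsPath → p.length = l →
    f (C.vertex s) = f (C.vertex t)

theorem injOn_vertex (C : ChordedCycle H) (w : ℤ) :
    Set.InjOn C.vertex (Set.Ico w (w + C.length)) := by
  intro s ⟨hs, hs'⟩ t ⟨ht, ht'⟩ h
  exact sub_eq_zero.1 (Int.eq_zero_of_abs_lt_dvd (C.dvd_sub_of_eq h) (by rw [abs_lt]; omega))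

namespace IsPathInvariant

variable {α : Type*} {C : ChordedCycle H} {f : V → α} {l : ℕ}

theorem reverse (h : C.IsPathInvariant f l) : C.reverse.IsPathInvariant f l :=
  fun s t => h (-s) (-t)

theorem eq_of_steps (h : C.IsPathInvariant f l) (y : ℕ → ℤ) (w : ℤ)
    (hmem : ∀ t ≤ l, y t ∈ Set.Ico w (w + C.length)) (hinj : Set.InjOn y (Set.Iic l))
    (hstep : ∀ t < l, y (t + 1) = y t + 1 ∨ y t = y (t + 1) + 1 ∨ y t = 0 ∧ y (t + 1) = C.chord) :
    f (C.vertex (y 0)) = f (C.vertex (y l)) := by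
  obtain ⟨p, hp, hpl⟩ := exists_isPath_of_seq (q := C.vertex ∘ y)
    ((C.injOn_vertex w).comp hinj hmem) fun i hi => by
      rcases hstep i hi with h | h | ⟨h, h'⟩
      · simpa only [Function.comp, h] using C.adj_succ _
      · simpa only [Function.comp, h] using (C.adj_succ _).symm
      · simpa only [Function.comp, h, h'] using C.adj_chord
  exact h _ _ p hp hpl

theorem periodic (h : C.IsPathInvariant f l) (hl : l < C.length) :
    Function.Periodic (f ∘ C.vertex) l := by
  intro z
  have := h.eq_of_steps (fun t => z + t) z (fun t ht => by simp only [Set.mem_Ico]; omega)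
    (fun i _ j _ hij => by simpa using hij) (fun t _ => by left; push_cast; ring)
  simpa using this.symm

theorem eq_reflect (h : C.IsPathInvariant f l) (hl : l < C.length) {j : ℤ}
    (h₀ : max 0 (C.chord + l - C.length) ≤ j) (hj : j < min (l : ℤ) C.chord) :
    f (C.vertex j) = f (C.vertex (C.chord - 1 - j)) := by
  have := C.two_le_chord
  have := C.chord_add_two_le
  -- The path runs from `j` back to `0`, crosses the chord, and runs on away from it.
  have key := h.eq_of_steps (fun t => if (t : ℤ) ≤ j then j - t else C.chord + (t - j - 1)) 0
    (fun t ht => by simp only [Set.mem_Ico]; split_ifs <;> omega)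
    (fun i _ j _ hij => by dsimp only at hij; split_ifs at hij <;> omega)
    (fun t _ => by push_cast; split_ifs <;> omega)
  rw [if_pos (by simp; omega), if_neg (by omega)] at key
  have hper := h.periodic hl (C.chord - 1 - j)
  simp only [Function.comp] at hper
  rw [← hper]
  convert key using 3
  · simp
  · ring

theorem eq_reflect' (h : C.IsPathInvariant f l) (hl : l < C.length) {j : ℤ}
    (h₀ : max 0 (l - C.chord) ≤ j) (hj : j < min (l : ℤ) (C.length - C.chord)) :
    f (C.vertex (-j)) = f (C.vertex (C.chord + 1 + j)) := by
  have key := h.reverse.eq_reflect (j := j) hl (by simp only [ChordedCycle.reverse]; omega)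
    (by simp only [ChordedCycle.reverse]; omega)
  simp only [ChordedCycle.reverse] at key
  rw [key, ← C.periodic]
  congr 2
  ring

theorem periodic_chord_add_one (h : C.IsPathInvariant f l) (hl₀ : 0 < l) (hl : l ≤ C.chord) :
    Function.Periodic (f ∘ C.vertex) (C.chord + 1) := by
  have := C.two_le_chord
  have := C.chord_add_two_le
  have hper := h.periodic (by omega)
  suffices f ∘ C.vertex = fun j => (f ∘ C.vertex) (C.chord + 1 + j) by
    intro j
    rw [add_comm]
    exact (congrFun this j).symm
  refine eq_of_eqOn_Ico_of_periodic (a := 0) (mod_cast hl₀) hper (hper.const_add _) ?_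
  intro j ⟨hj₀, hj⟩
  -- The path runs from `j` back to `0`, crosses the chord, and continues back towards `j`.
  have key := h.eq_of_steps (fun t => if (t : ℤ) ≤ j then j - t else C.chord - (t - j - 1)) 0
    (fun t ht => by simp only [Set.mem_Ico]; split_ifs <;> omega)
    (fun i hi i' hi' hii' => by
      simp only [Set.mem_Iic] at hi hi'; dsimp only at hii'; split_ifs at hii' <;> omega)
    (fun t ht => by push_cast; split_ifs <;> omega)
  rw [if_pos (by simp; omega), if_neg (by omega)] at key
  dsimp only
  rw [← hper.sub_eq (C.chord + 1 + j)]
  simp only [Function.comp]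
  convert key using 3
  · simp
  · ring

theorem periodic_chord_sub_one (h : C.IsPathInvariant f l) (hl₀ : 0 < l)
    (hl : l ≤ C.length - C.chord) : Function.Periodic (f ∘ C.vertex) (C.chord - 1) := by
  have hrev : Function.Periodic (f ∘ C.reverse.vertex) (C.length - C.chord + 1) :=
    h.reverse.periodic_chord_add_one hl₀ hl
  have hper : Function.Periodic (f ∘ C.vertex) (C.length - C.chord + 1) := by
    intro z
    simpa [ChordedCycle.reverse, add_comm z] using hrev.sub_eq (-z)
  have := (C.periodic.comp f).sub_period hper
  rwa [show C.length - (C.length - C.chord + 1) = C.chord - 1 by ring] at this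

theorem periodic_two_of_periodic (h : C.IsPathInvariant f l) (hl : l < C.length) {p : ℤ}
    (hp : 0 < p) (hper : Function.Periodic (f ∘ C.vertex) p)
    (hp₁ : max 0 (C.chord + l - C.length) + p ≤ min (l : ℤ) C.chord)
    (hp₂ : max 0 (l - C.chord) + p ≤ min (l : ℤ) (C.length - C.chord)) :
    Function.Periodic (f ∘ C.vertex) 2 := by
  have hreflect := eq_of_eqOn_Ico_of_periodic hp hper (hper.const_sub (C.chord - 1))
    fun j hj => h.eq_reflect hl hj.1 (hj.2.trans_le hp₁)
  have hreflect' := eq_of_eqOn_Ico_of_periodic hp (by simpa using hper.const_sub 0)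
    (hper.const_add (C.chord + 1)) fun j hj => h.eq_reflect' hl hj.1 (hj.2.trans_le hp₂)
  intro z
  have h₁ := congrFun hreflect z
  have h₂ := congrFun hreflect' (z - (C.chord - 1))
  simp only [Function.comp] at h₁ h₂ ⊢
  rw [h₁, ← neg_sub z, h₂]
  congr 2
  ring

/-- The composition of the reflections `j ↦ chord - 1 - j` and `-j ↦ chord + 1 + j` is the
translation by `2`. Each holds a priori on an interval only, which has to contain a full period; one
of `l`, `length - chord - 1`, `chord - 1` and `length - l` is a short enough period. -/
theorem periodic_two (h : C.IsPathInvariant f l) (hl₀ : 0 < l) (hl : l < C.length) :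
    Function.Periodic (f ∘ C.vertex) 2 := by
  have := C.two_le_chord
  have := C.chord_add_two_le
  have hlen : Function.Periodic (f ∘ C.vertex) C.length := C.periodic.comp f
  rcases le_or_gt (l : ℤ) C.chord with h₁ | h₁ <;>
    rcases le_or_gt (l : ℤ) (C.length - C.chord) with h₂ | h₂
  · exact h.periodic_two_of_periodic hl (mod_cast hl₀) (h.periodic hl) (by omega) (by omega)
  · exact h.periodic_two_of_periodic hl (by omega)
      (hlen.sub_period (h.periodic_chord_add_one hl₀ h₁)) (by omega) (by omega)
  · exact h.periodic_two_of_periodic hl (by omega) (h.periodic_chord_sub_one hl₀ h₂)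
      (by omega) (by omega)
  · exact h.periodic_two_of_periodic hl (by omega) (hlen.sub_period (h.periodic hl))
      (by omega) (by omega)

end IsPathInvariant
end ChordedCycle

section ChordedCycleExistence

variable {V : Type*} {H : SimpleGraph V}

/-- The chorded cycle made of the first `t + 1` vertices of a path and of two edges from its start
`u`, to the vertices with indices `s` and `t`. -/
def ChordedCycle.ofPath {u v : V} {p : H.Walk u v} (hp : p.IsPath) {s t : ℕ} (hs : 2 ≤ s)
    (hst : s < t) (ht : t ≤ p.length) (hus : H.Adj u (p.getVert s)) (hut : H.Adj u (p.getVert t)) :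
    ChordedCycle H where
  vertex z := p.getVert (z % (t + 1)).toNat
  length := t + 1
  chord := s
  periodic z := by simp
  dvd_sub_of_eq {z w} h := by
    have hz := Int.emod_lt_of_pos z (b := t + 1) (by omega)
    have hw := Int.emod_lt_of_pos w (b := t + 1) (by omega)
    have hz₀ := Int.emod_nonneg z (b := t + 1) (by omega)
    have hw₀ := Int.emod_nonneg w (b := t + 1) (by omega)
    have := hp.getVert_injOn (by simp only [Set.mem_ofPred_eq]; omega)
      (by simp only [Set.mem_ofPred_eq]; omega) h
    exact Int.ModEq.dvd (show w % (t + 1) = z % (t + 1) by omega)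
  adj_succ z := by
    have hz := Int.emod_lt_of_pos z (b := t + 1) (by omega)
    have hz₀ := Int.emod_nonneg z (b := t + 1) (by omega)
    rcases (Int.lt_add_one_iff.1 hz).eq_or_lt with h | h
    · have hz' : (z + 1) % (t + 1 : ℤ) = 0 := by rw [Int.add_emod, h]; simp
      simpa [h, hz'] using hut.symm
    · have hz' : (z + 1) % (t + 1 : ℤ) = z % (t + 1) + 1 := by
        rw [← Int.emod_add_emod]
        exact Int.emod_eq_of_lt (by omega) (by omega)
      rw [hz', Int.toNat_add hz₀ zero_le_one]
      exact p.adj_getVert_succ (by omega)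
  adj_chord := by
    have hs' : (s : ℤ) % (t + 1) = s := Int.emod_eq_of_lt (by omega) (by omega)
    simpa [hs'] using hus
  two_le_chord := mod_cast hs
  chord_add_two_le := by omega

theorem exists_isPath_forall_adj_mem_support [Finite H.edgeSet] (hH : H ≠ ⊥) :
    ∃ (u v : V) (p : H.Walk u v), p.IsPath ∧ u ∈ H.support ∧ ∀ w, H.Adj u w → w ∈ p.support := by
  obtain ⟨a, b, hab⟩ := SimpleGraph.ne_bot_iff_exists_adj.1 hH
  have : Nonempty V := ⟨a⟩
  obtain ⟨u, v, p, hp, hmax⟩ := SimpleGraph.Walk.exists_isPath_forall_isPath_length_le_length H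
  have hpos : 1 ≤ p.length := hmax a b _ (.of_adj hab)
  refine ⟨u, v, p, hp, ⟨_, p.adj_snd (by rw [← SimpleGraph.Walk.length_eq_zero_iff]; omega)⟩, ?_⟩
  intro w huw
  by_contra hw
  have := hmax w v (.cons huw.symm p) (hp.cons hw)
  simp at this

theorem exists_chordedCycle [H.LocallyFinite] [Finite H.edgeSet] (hH : H ≠ ⊥) {d : ℕ}
    (hd : 3 ≤ d) (hdeg : ∀ v ∈ H.support, d ≤ H.degree v) : ∃ C : ChordedCycle H, d < C.length := by
  obtain ⟨u, v, p, hp, hu, hnb⟩ := exists_isPath_forall_adj_mem_support hH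
  set J := {j ∈ Finset.Icc 1 p.length | H.Adj u (p.getVert j)} with hJ
  have hJd : d ≤ J.card := by
    refine (hdeg u hu).trans <| (Finset.card_le_card fun w hw => ?_).trans
      (Finset.card_image_le (f := p.getVert))
    rw [SimpleGraph.mem_neighborFinset] at hw
    obtain ⟨j, rfl, hj⟩ := SimpleGraph.Walk.mem_support_iff_exists_getVert.1 (hnb w hw)
    refine Finset.mem_image_of_mem _ (Finset.mem_filter.2 ⟨Finset.mem_Icc.2 ⟨?_, hj⟩, hw⟩)
    by_contra hj₀
    simp_all
  have hJne : J.Nonempty := Finset.card_pos.1 (by omega)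
  have mem_J {j : ℕ} (hj : j ∈ J) : (1 ≤ j ∧ j ≤ p.length) ∧ H.Adj u (p.getVert j) := by
    simpa [hJ] using hj
  obtain ⟨⟨-, ht⟩, hut⟩ := mem_J (J.max'_mem hJne)
  have hdt : d ≤ J.max' hJne := by
    have : J ⊆ Finset.Icc 1 (J.max' hJne) := fun j hj =>
      Finset.mem_Icc.2 ⟨(mem_J hj).1.1, J.le_max' j hj⟩
    simpa using hJd.trans (Finset.card_le_card this)
  obtain ⟨s, hsJ, hs⟩ := Finset.exists_mem_notMem_of_card_lt_card
    (show ({1, J.max' hJne} : Finset ℕ).card < J.card from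
      Finset.card_le_two.trans_lt (hd.trans hJd))
  rw [Finset.mem_insert, Finset.mem_singleton, not_or] at hs
  obtain ⟨⟨hs₁, -⟩, hus⟩ := mem_J hsJ
  refine ⟨.ofPath hp (by omega) ((J.le_max' s hsJ).lt_of_ne hs.2) ht hus hut, ?_⟩
  simp only [ChordedCycle.ofPath]
  omega

end ChordedCycleExistence

/-! ### Dense subgraphs -/

section DenseSubgraph

variable {V : Type*}

theorem exists_le_forall_mem_support_lt_degree [Fintype V] {d : ℕ} (G : SimpleGraph V)
    (hG : d * G.support.ncard < G.edgeSet.ncard) :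
    ∃ H ≤ G, H ≠ ⊥ ∧ ∀ v ∈ H.support, d < H.degree v := by
  induction G using WellFoundedLT.induction with
  | ind G ih =>
  by_cases hdeg : ∀ v ∈ G.support, d < G.degree v
  · exact ⟨G, le_rfl, by rintro rfl; simp at hG, hdeg⟩
  push Not at hdeg
  obtain ⟨v, hv, hvd⟩ := hdeg
  have hlt : G.deleteIncidenceSet v < G := by
    refine (G.deleteIncidenceSet_le v).lt_of_ne fun h => ?_
    rw [← h] at hv
    exact (G.support_deleteIncidenceSet_subset v hv).2 rfl
  have hedges : (G.deleteIncidenceSet v).edgeSet.ncard + G.degree v = G.edgeSet.ncard := by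
    rw [G.edgeSet_deleteIncidenceSet, ← G.card_incidenceSet_eq_degree, Set.fintypeCard_eq_ncard,
      Set.ncard_sdiff_add_ncard_of_subset (G.incidenceSet_subset v)]
  have hsupport : (G.deleteIncidenceSet v).support.ncard < G.support.ncard := by
    refine Set.ncard_lt_ncard ((G.support_deleteIncidenceSet_subset v).trans_ssubset ?_)
    exact Set.sdiff_singleton_ssubset.2 hv
  obtain ⟨H, hH, h⟩ := ih _ hlt (by have := Nat.mul_le_mul_left d hsupport; lia)
  exact ⟨H, hH.trans hlt.le, h⟩

theorem exists_le_induce_connected_lt_degree [Fintype V] {d : ℕ} (G : SimpleGraph V)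
    (hG : d * Fintype.card V < G.edgeSet.ncard) :
    ∃ H ≤ G, ∃ s : Set V, (H.induce s).Connected ∧ ∀ v : s, d < (H.induce s).degree v := by
  obtain ⟨H, hHG, hne, hdeg⟩ := exists_le_forall_mem_support_lt_degree G <|
    (Nat.mul_le_mul_left d (Set.ncard_le_card G.support)).trans_lt <| by simpa using hG
  obtain ⟨a, b, hab⟩ := SimpleGraph.ne_bot_iff_exists_adj.1 hne
  set K := H.connectedComponentMk a
  have hconn : (H.induce K.supp).Connected := K.connected_toSimpleGraph
  refine ⟨H, hHG, K.supp, hconn, fun v => ?_⟩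
  have hb : b ∈ K.supp := K.mem_supp_of_adj_mem_supp rfl hab
  have : Nontrivial K.supp := ⟨⟨a, rfl⟩, ⟨b, hb⟩, fun h => hab.ne (congrArg Subtype.val h)⟩
  obtain ⟨w, hvw⟩ := hconn.preconnected.exists_adj_of_nontrivial v
  have hnbr : H.neighborSet v ⊆ K.supp := fun w => K.mem_supp_of_adj_mem_supp v.2
  refine (hdeg v ⟨w, hvw⟩).trans_eq ?_
  convert (SimpleGraph.degree_induce_of_neighborSet_subset hnbr).symm

theorem two_mul_card_filter_mem_iff_notMem [Fintype V] {u v : V} (huv : u ≠ v) :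
    2 * (Finset.univ.filter fun S : Finset V => u ∈ S ↔ v ∉ S).card = Fintype.card (Finset V) := by
  rw [← Finset.card_univ, ← Finset.card_filter_add_card_filter_not (s := Finset.univ)
    (fun S : Finset V => u ∈ S ↔ v ∉ S), two_mul]
  congr 1
  -- Toggling the membership of `u` in `S` matches the two kinds of sets.
  refine Finset.card_equiv (symmDiff_left_involutive {u}).toPerm fun S => ?_
  have hu : u ∈ symmDiff S {u} ↔ u ∉ S := by simp [Finset.mem_symmDiff]
  have hv : v ∈ symmDiff S {u} ↔ v ∈ S := by simp [Finset.mem_symmDiff, huv.symm]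
  simp only [Finset.mem_filter_univ, Function.Involutive.coe_toPerm, hu, hv]
  tauto

theorem exists_ncard_edgeSet_le_two_mul_between [Finite V] (G : SimpleGraph V) :
    ∃ S : Set V, G.edgeSet.ncard ≤ 2 * (G.between S Sᶜ).edgeSet.ncard := by
  have := Fintype.ofFinite V
  let cut (S : Finset V) : Set (Sym2 V) := (G.between S (S : Set V)ᶜ).edgeSet
  obtain ⟨S, -, hS⟩ :=
    (Finset.univ : Finset (Finset V)).exists_max_image (fun S => (cut S).ncard) ⟨∅, by simp⟩
  refine ⟨S, Nat.le_of_mul_le_mul_right ?_ (Fintype.card_pos (α := Finset V))⟩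
  have hhalf : ∀ e ∈ G.edgeFinset,
      2 * (Finset.univ.bipartiteAbove (fun e S => e ∈ cut S) e).card = Fintype.card (Finset V) := by
    intro e he
    induction e with | h u v =>
    rw [SimpleGraph.mem_edgeFinset, SimpleGraph.mem_edgeSet] at he
    rw [← two_mul_card_filter_mem_iff_notMem he.ne]
    congr 2
    ext S
    simp only [Finset.mem_bipartiteAbove, Finset.mem_filter_univ, Finset.mem_univ, true_and, cut,
      SimpleGraph.mem_edgeSet, SimpleGraph.between_adj, he, SetLike.mem_coe, Set.mem_compl_iff]
    tauto
  have hcut (T : Finset V) :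
      (G.edgeFinset.bipartiteBelow (fun e S => e ∈ cut S) T).card ≤ (cut S).ncard := by
    refine le_trans ?_ (hS T (Finset.mem_univ T))
    rw [← Set.ncard_coe_finset]
    exact Set.ncard_le_ncard (fun e he => (Finset.mem_filter.1 he).2)
  calc
    G.edgeSet.ncard * Fintype.card (Finset V)
      = ∑ e ∈ G.edgeFinset, 2 * (Finset.univ.bipartiteAbove (fun e S => e ∈ cut S) e).card := by
        rw [Finset.sum_const_nat hhalf, ← SimpleGraph.coe_edgeFinset, Set.ncard_coe_finset]
    _ = 2 * ∑ T, (G.edgeFinset.bipartiteBelow (fun e S => e ∈ cut S) T).card := by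
        rw [← Finset.mul_sum, Finset.sum_card_bipartiteAbove_eq_sum_card_bipartiteBelow]
    _ ≤ 2 * ∑ _T : Finset V, (cut S).ncard :=
        Nat.mul_le_mul_left _ (Finset.sum_le_sum fun T _ => hcut T)
    _ = 2 * (cut S).ncard * Fintype.card (Finset V) := by
        rw [Finset.sum_const, Finset.card_univ, smul_eq_mul]; ring

end DenseSubgraph

/-! ### Breadth-first search layers -/

/-- `par` assigns to each vertex other than `x` a neighbour that is one step closer to `x`: its
parent in a breadth-first search tree of `G` rooted at `x`. -/
def IsBFSParent {V : Type*} (G : SimpleGraph V) (x : V) (par : V → V) : Prop :=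
  ∀ v, v ≠ x → G.Adj v (par v) ∧ G.dist x v = G.dist x (par v) + 1

theorem exists_isBFSParent {V : Type*} {G : SimpleGraph V} (hG : G.Connected) (x : V) :
    ∃ par, IsBFSParent G x par := by
  suffices ∀ v, ∃ u, v ≠ x → G.Adj v u ∧ G.dist x v = G.dist x u + 1 from
    ⟨_, fun v => (this v).choose_spec⟩
  intro v
  obtain ⟨p, hp⟩ := hG.exists_walk_length_eq_dist x v
  refine ⟨p.penultimate, fun hv => ?_⟩
  have hadj := p.adj_penultimate (SimpleGraph.Walk.not_nil_of_ne hv.symm)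
  have hle := SimpleGraph.dist_le p.dropLast
  have hdist := hadj.diff_dist_adj (u := x)
  have := hG.pos_dist_of_ne hv.symm
  rw [SimpleGraph.Walk.length_dropLast] at hle
  exact ⟨hadj.symm, by omega⟩

namespace IsBFSParent

variable {V : Type*} {G : SimpleGraph V} {x : V} {par : V → V}

theorem eq_root_of_dist_eq_zero (hpar : IsBFSParent G x par) {v : V} (hv : G.dist x v = 0) :
    v = x := by
  by_contra hvx
  have := (hpar v hvx).2
  omega

theorem iterate_dist (hpar : IsBFSParent G x par) (v : V) : par^[G.dist x v] v = x := by
  induction hi : G.dist x v generalizing v with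
  | zero => exact hpar.eq_root_of_dist_eq_zero hi
  | succ i ih =>
    have hvx : v ≠ x := by rintro rfl; simp at hi
    exact ih _ (by have := (hpar v hvx).2; omega)

theorem exists_iterate_image_nontrivial (hpar : IsBFSParent G x par) {A : Set V} {i : ℕ}
    (hA : A.Nontrivial) (hAi : ∀ a ∈ A, G.dist x a = i) :
    ∃ m < i, (par^[m] '' A).Nontrivial ∧ (par^[m + 1] '' A).Subsingleton := by
  have hi : (par^[i] '' A).Subsingleton := by
    rintro _ ⟨a, ha, rfl⟩ _ ⟨b, hb, rfl⟩
    rw [← hAi a ha, hpar.iterate_dist, hAi a ha, ← hAi b hb, hpar.iterate_dist]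
  obtain ⟨m, hm, hm'⟩ := Nat.exists_not_and_succ_of_not_zero_of_exists
    (p := fun m => (par^[m] '' A).Subsingleton) (by simpa using hA) ⟨i, hi⟩
  refine ⟨m, ?_, Set.not_subsingleton_iff.1 hm, hm'⟩
  by_contra him
  rw [← Nat.sub_add_cancel (not_lt.1 him), Function.iterate_add, Set.image_comp] at hm
  exact hm (hi.image _)

theorem adj_and_dist_of_dist_eq (hpar : IsBFSParent G x par) {a b : V} (hab : a ≠ b)
    (hdist : G.dist x a = G.dist x b) : G.Adj a (par a) ∧ G.dist x a = G.dist x (par a) + 1 := by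
  refine hpar a ?_
  rintro rfl
  exact hab (hpar.eq_root_of_dist_eq_zero (by simpa using hdist.symm)).symm

theorem hasCycleLength_of_isPath {V : Type} {G : SimpleGraph V} {x : V} {par : V → V}
    (hpar : IsBFSParent G x par) {m : ℕ} {a b : V} {p : G.Walk a b} (hp : p.IsPath)
    (hab : G.dist x a = G.dist x b)
    (hsupp : ∀ w ∈ p.support, G.dist x a ≤ G.dist x w) (hne : par^[m] a ≠ par^[m] b)
    (heq : par^[m + 1] a = par^[m + 1] b) : HasCycleLength G (p.length + 2 * (m + 1)) := by
  have hne' : a ≠ b := fun h => hne (congrArg _ h)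
  obtain ⟨ha, hda⟩ := hpar.adj_and_dist_of_dist_eq hne' hab
  obtain ⟨hb, hdb⟩ := hpar.adj_and_dist_of_dist_eq hne'.symm hab.symm
  have hpa : par a ∉ p.support := fun h => by have := hsupp _ h; omega
  have hpb : par b ∉ p.support := fun h => by have := hsupp _ h; omega
  cases m with
  | zero =>
    have hpar_eq : par a = par b := heq
    rw [hpar_eq] at ha hpa
    refine ⟨_, .cons ha.symm (p.concat hb), ?_, by simp⟩
    rw [SimpleGraph.Walk.cons_isCycle_iff, SimpleGraph.Walk.edges_concat, List.concat_eq_append,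
      List.mem_append, List.mem_singleton]
    refine ⟨hp.concat hpb hb, ?_⟩
    rintro (h | h)
    · exact hpa (p.fst_mem_support_of_mem_edges h)
    · rw [Sym2.eq_swap, Sym2.congr_left] at h
      exact hne' h
  | succ m =>
    have hpar_ne : par a ≠ par b := fun h => hne (congrArg par^[m] h)
    have hq : (p.concat hb |>.cons ha.symm).IsPath := by
      refine (hp.concat hpb hb).cons ?_
      simp [SimpleGraph.Walk.support_concat, hpa, hpar_ne]
    have := hpar.hasCycleLength_of_isPath hq (by omega) ?_ hne heq
    · convert this using 1
      simp only [SimpleGraph.Walk.length_cons, SimpleGraph.Walk.length_concat]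
      ring
    · intro w hw
      simp only [SimpleGraph.Walk.support_cons, SimpleGraph.Walk.support_concat, List.mem_cons,
        List.mem_append, List.not_mem_nil, or_false] at hw
      rcases hw with rfl | hw | rfl
      · rfl
      · have := hsupp w hw; omega
      · omega

end IsBFSParent

section Bipartite

variable {V : Type*} {H : SimpleGraph V} {S T : Set V}

theorem mem_iff_notMem_of_isBipartiteWith (hH : H.IsBipartiteWith S T) {u v : V}
    (huv : H.Adj u v) : u ∈ S ↔ v ∉ S := by
  have hST {w : V} : w ∈ T → w ∉ S := fun hT hS => Set.disjoint_left.1 hH.disjoint hS hT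
  rcases hH.mem_of_adj huv with ⟨hu, hv⟩ | ⟨hu, hv⟩
  · exact iff_of_true hu (hST hv)
  · exact iff_of_false (hST hu) (not_not.2 hv)

theorem mem_iff_mem_of_even_length (hH : H.IsBipartiteWith S T) {u v : V} (p : H.Walk u v)
    (hp : Even p.length) : u ∈ S ↔ v ∈ S := by
  let color : H.Coloring Bool := .mk (fun v => decide (v ∈ S)) fun huv => by
    simp [mem_iff_notMem_of_isBipartiteWith hH huv]
  have heq : decide (u ∈ S) = true ↔ decide (v ∈ S) = true := (color.even_length_iff_congr p).1 hp
  simpa only [decide_eq_true_iff] using heq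

theorem nontrivial_range_vertex_inter (hH : H.IsBipartiteWith S T)
    (C : ChordedCycle H) : (Set.range C.vertex ∩ S).Nontrivial := by
  have hmem (z : ℤ) := mem_iff_notMem_of_isBipartiteWith hH (C.adj_succ z)
  obtain ⟨s, hs⟩ : ∃ s, C.vertex s ∈ S := by
    by_contra! h
    exact h 0 ((hmem 0).2 (h _))
  have hs' : C.vertex (s + 1 + 1) ∈ S := by
    by_contra h
    exact (hmem s).1 hs ((hmem (s + 1)).2 h)
  refine ⟨_, ⟨⟨s + 1 + 1, rfl⟩, hs'⟩, _, ⟨⟨s, rfl⟩, hs⟩, fun h => ?_⟩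
  have := Int.le_of_dvd (by omega) (C.dvd_sub_of_eq h)
  have := C.two_le_chord
  have := C.chord_add_two_le
  omega

end Bipartite

/-- The set of vertices of `G` at distance `i` from `x`. -/
def distLayer {V : Type*} (G : SimpleGraph V) (x : V) (i : ℕ) : Set V :=
  {v | G.dist x v = i}

section Layers

variable {V : Type} {G : SimpleGraph V} {x : V} {i k : ℕ}

theorem isBipartiteWith_between_distLayer {V : Type*} (G : SimpleGraph V) (x : V) (i : ℕ) :
    (G.between (distLayer G x i) (distLayer G x (i + 1))).IsBipartiteWith
      (distLayer G x i) (distLayer G x (i + 1)) := by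
  refine SimpleGraph.between_isBipartiteWith (Set.disjoint_left.2 fun v hv hv' => ?_)
  simp_all [distLayer]

theorem IsBFSParent.isPathInvariant_of_not_hasCycleLength {par : V → V}
    (hpar : IsBFSParent G x par)
    (C : ChordedCycle (G.between (distLayer G x i) (distLayer G x (i + 1))))
    {m : ℕ} (hmk : m + 1 < k) (hcyc : ¬ HasCycleLength G (2 * k))
    (hm : (par^[m + 1] '' (Set.range C.vertex ∩ distLayer G x i)).Subsingleton) :
    C.IsPathInvariant (fun v => if v ∈ distLayer G x i then some (par^[m] v) else none)
      (2 * (k - (m + 1))) := by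
  have hH := isBipartiteWith_between_distLayer G x i
  intro s t p hp hpl
  have hst := mem_iff_mem_of_even_length hH p (hpl ▸ even_two_mul _)
  by_cases hs : C.vertex s ∈ distLayer G x i
  · have ht := hst.1 hs
    simp only [if_pos hs, if_pos ht, Option.some_inj]
    by_contra hne
    refine hcyc ?_
    convert hpar.hasCycleLength_of_isPath (hp.mapLe SimpleGraph.between_le) (hs.trans ht.symm) ?_
      hne (hm (Set.mem_image_of_mem _ ⟨⟨s, rfl⟩, hs⟩)
        (Set.mem_image_of_mem _ ⟨⟨t, rfl⟩, ht⟩)) using 1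
    · simp only [SimpleGraph.Walk.length_map, hpl]
      omega
    · intro w hw
      rw [SimpleGraph.Walk.support_mapLe_eq_support] at hw
      have hnil : ¬p.Nil := by rw [← SimpleGraph.Walk.length_eq_zero_iff]; omega
      have := SimpleGraph.isBipartiteWith_support_subset hH
        (SimpleGraph.mem_support_of_mem_walk_support p hnil hw)
      simp only [distLayer, Set.mem_union, Set.mem_ofPred_eq] at this hs
      omega
  · simp only [if_neg hs, if_neg (hst.not.1 hs)]

theorem hasCycleLength_of_chordedCycle_between (hG : G.Connected) (hik : i < k)
    (C : ChordedCycle (G.between (distLayer G x i) (distLayer G x (i + 1))))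
    (hC : 2 * k ≤ C.length) : HasCycleLength G (2 * k) := by
  by_contra hcyc
  have hH := isBipartiteWith_between_distLayer G x i
  obtain ⟨par, hpar⟩ := exists_isBFSParent hG x
  obtain ⟨m, hmi, hne, heq⟩ := hpar.exists_iterate_image_nontrivial
    (nontrivial_range_vertex_inter hH C) fun v hv => hv.2
  have htwo := (hpar.isPathInvariant_of_not_hasCycleLength C (by omega) hcyc heq).periodic_two
    (by omega) (by push_cast [Nat.cast_sub (show m + 1 ≤ k by omega)]; omega)
  refine hne.not_subsingleton ?_
  rintro _ ⟨_, ⟨⟨s, rfl⟩, hs⟩, rfl⟩ _ ⟨_, ⟨⟨t, rfl⟩, ht⟩, rfl⟩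
  obtain ⟨y, ⟨hsy, hys⟩, hy⟩ := htwo.exists_mem_Ico two_pos t s
  simp only [Function.comp, if_pos ht] at hy
  split_ifs at hy with hyi
  obtain rfl | rfl : y = s ∨ y = s + 1 := by omega
  · exact (Option.some_inj.1 hy).symm
  · exact absurd hyi ((mem_iff_notMem_of_isBipartiteWith hH (C.adj_succ s)).1 hs)

end Layers

/-! ### Growth of the layers -/

section LayerCounts

variable {V : Type*} {G : SimpleGraph V} {x : V} {i : ℕ}

theorem dist_eq_add_one_or_dist_eq_add_one_of_adj (hG : G.Connected) (hbip : G.IsBipartite)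
    (x : V) {u v : V} (huv : G.Adj u v) :
    G.dist x v = G.dist x u + 1 ∨ G.dist x u = G.dist x v + 1 := by
  obtain ⟨S, T, hST⟩ := hbip.exists_isBipartiteWith
  obtain ⟨p, hp⟩ := hG.exists_walk_length_eq_dist x u
  obtain ⟨q, hq⟩ := hG.exists_walk_length_eq_dist x v
  have hne : G.dist x u ≠ G.dist x v := fun heq => by
    have hlen : (p.reverse.append q).length = G.dist x u + G.dist x u := by
      rw [SimpleGraph.Walk.length_append, SimpleGraph.Walk.length_reverse, hp, hq, heq]
    have hsame := mem_iff_mem_of_even_length hST (p.reverse.append q) ⟨_, hlen⟩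
    exact iff_not_self (hsame.symm.trans (mem_iff_notMem_of_isBipartiteWith hST huv))
  have := huv.diff_dist_adj (u := x)
  omega

theorem distLayer_zero (hG : G.Connected) (x : V) : distLayer G x 0 = {x} := by
  ext v
  simp [distLayer, hG.dist_eq_zero_iff, eq_comm]

theorem neighborSet_subset_of_mem_distLayer_zero (hG : G.Connected) {v : V}
    (hv : v ∈ distLayer G x 0) :
    G.neighborSet v ⊆ (G.between (distLayer G x 0) (distLayer G x 1)).neighborSet v := by
  rw [distLayer_zero hG, Set.mem_singleton_iff] at hv
  subst hv
  intro w hvw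
  have : G.dist v w = 1 := SimpleGraph.dist_eq_one_iff_adj.2 hvw
  simp_all [SimpleGraph.between_adj, distLayer]

theorem neighborSet_subset_of_mem_distLayer_add_one (hG : G.Connected) (hbip : G.IsBipartite)
    {v : V} (hv : v ∈ distLayer G x (i + 1)) :
    G.neighborSet v ⊆ (G.between (distLayer G x i) (distLayer G x (i + 1))).neighborSet v ∪
      (G.between (distLayer G x (i + 1)) (distLayer G x (i + 1 + 1))).neighborSet v := by
  intro w hvw
  have hdist := dist_eq_add_one_or_dist_eq_add_one_of_adj hG hbip x hvw
  simp only [distLayer, Set.mem_ofPred_eq] at hv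
  simp only [Set.mem_union, SimpleGraph.mem_neighborSet, SimpleGraph.between_adj, distLayer,
    Set.mem_ofPred_eq] at hvw ⊢
  simp only [hvw, true_and]
  omega

variable [Fintype V]

theorem sum_degree_eq_ncard_edgeSet_of_isBipartiteWith {H : SimpleGraph V} {S T : Set V}
    (hH : H.IsBipartiteWith S T) : ∑ v ∈ S.toFinset, H.degree v = H.edgeSet.ncard := by
  rw [← SimpleGraph.coe_edgeFinset, Set.ncard_coe_finset]
  exact SimpleGraph.isBipartiteWith_sum_degrees_eq_card_edges (t := T.toFinset) (by simpa)

theorem mul_ncard_distLayer_zero_le {d : ℕ} (hG : G.Connected) (hd : ∀ v, d ≤ G.degree v)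
    (x : V) : d * (distLayer G x 0).ncard ≤
      (G.between (distLayer G x 0) (distLayer G x 1)).edgeSet.ncard := by
  rw [Set.ncard_eq_toFinset_card', mul_comm,
    ← sum_degree_eq_ncard_edgeSet_of_isBipartiteWith (isBipartiteWith_between_distLayer G x 0)]
  refine Finset.card_nsmul_le_sum _ _ _ fun v hv => (hd v).trans ?_
  simp only [← SimpleGraph.card_neighborSet_eq_degree, Set.fintypeCard_eq_ncard]
  exact Set.ncard_le_ncard
    (neighborSet_subset_of_mem_distLayer_zero hG (Set.mem_toFinset.1 hv))

theorem mul_ncard_distLayer_add_one_le {d : ℕ} (hG : G.Connected) (hbip : G.IsBipartite)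
    (hd : ∀ v, d ≤ G.degree v) (x : V) (i : ℕ) : d * (distLayer G x (i + 1)).ncard ≤
      (G.between (distLayer G x i) (distLayer G x (i + 1))).edgeSet.ncard +
      (G.between (distLayer G x (i + 1)) (distLayer G x (i + 1 + 1))).edgeSet.ncard := by
  rw [Set.ncard_eq_toFinset_card', mul_comm,
    ← sum_degree_eq_ncard_edgeSet_of_isBipartiteWith (isBipartiteWith_between_distLayer G x i).symm,
    ← sum_degree_eq_ncard_edgeSet_of_isBipartiteWith
      (isBipartiteWith_between_distLayer G x (i + 1)),
    ← Finset.sum_add_distrib]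
  refine Finset.card_nsmul_le_sum _ _ _ fun v hv => (hd v).trans ?_
  simp only [← SimpleGraph.card_neighborSet_eq_degree, Set.fintypeCard_eq_ncard]
  exact (Set.ncard_le_ncard (neighborSet_subset_of_mem_distLayer_add_one hG hbip
    (Set.mem_toFinset.1 hv))).trans (Set.ncard_union_le _ _)

end LayerCounts

theorem pow_mul_le_of_edge_counts {a e : ℕ → ℝ} {c q d : ℝ} {k : ℕ} (ha : ∀ i, 0 ≤ a i)
    (hc : 0 < c) (hq : 1 ≤ q) (hd : c * (q + 3) ≤ d)
    (he : ∀ i < k, e i ≤ c * (a i + a (i + 1)))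
    (hzero : d * a 0 ≤ e 0) (hsucc : ∀ i, d * a (i + 1) ≤ e i + e (i + 1)) :
    q ^ k * a 0 ≤ a k := by
  have hmul (i : ℕ) : c * ((q + 3) * a i) ≤ d * a i := by
    rw [← mul_assoc]; exact mul_le_mul_of_nonneg_right hd (ha i)
  have hstep : ∀ i < k, q * a i ≤ a (i + 1) := by
    intro i hi
    induction i with
    | zero =>
      have := le_of_mul_le_mul_left ((hmul 0).trans (hzero.trans (he 0 hi))) hc
      linarith [ha 0]
    | succ i ih =>
      have hgrow : a i ≤ a (i + 1) := (le_mul_of_one_le_left (ha i) hq).trans (ih (by omega))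
      have hdc : c * ((q + 3) * a (i + 1)) ≤ c * (a i + 2 * a (i + 1) + a (i + 1 + 1)) := by
        linarith [hmul (i + 1), hsucc i, he i (by omega), he (i + 1) hi]
      linarith [le_of_mul_le_mul_left hdc hc]
  clear he
  induction k with
  | zero => simp
  | succ k ih =>
    calc q ^ (k + 1) * a 0 = q * (q ^ k * a 0) := by ring
      _ ≤ q * a k := by gcongr; exact ih fun i hi => hstep i (by omega)
      _ ≤ a (k + 1) := hstep k k.lt_succ_self

section NoCycle

variable {V : Type} {G : SimpleGraph V} {x : V} {i k : ℕ}

theorem ncard_edgeSet_between_distLayer_le [Finite V] (hG : G.Connected)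
    (hcyc : ¬ HasCycleLength G (2 * k)) (hik : i < k) :
    (G.between (distLayer G x i) (distLayer G x (i + 1))).edgeSet.ncard ≤
      2 * k * ((distLayer G x i).ncard + (distLayer G x (i + 1)).ncard) := by
  by_contra! h
  have := Fintype.ofFinite V
  set B := G.between (distLayer G x i) (distLayer G x (i + 1))
  have hsupp : B.support.ncard ≤ (distLayer G x i).ncard + (distLayer G x (i + 1)).ncard :=
    (Set.ncard_le_ncard <| SimpleGraph.isBipartiteWith_support_subset <|
      isBipartiteWith_between_distLayer G x i).trans (Set.ncard_union_le _ _)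
  obtain ⟨H, hHB, hne, hdeg⟩ := exists_le_forall_mem_support_lt_degree B
    ((Nat.mul_le_mul_left _ hsupp).trans_lt h)
  obtain ⟨C, hC⟩ := exists_chordedCycle hne (d := 2 * k + 1) (by omega) hdeg
  have hCk : 2 * k ≤ C.length := by omega
  exact hcyc (hasCycleLength_of_chordedCycle_between hG hik (C.mono hHB) hCk)

theorem pow_le_card_of_not_hasCycleLength [Fintype V] {d : ℕ} {q : ℝ} (hG : G.Connected)
    (hbip : G.IsBipartite) (hcyc : ¬ HasCycleLength G (2 * k)) (hk : 0 < k)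
    (hd : ∀ v, d ≤ G.degree v) (hq : 1 ≤ q) (hqd : 2 * k * (q + 3) ≤ d) :
    q ^ k ≤ Fintype.card V := by
  obtain ⟨x⟩ := hG.nonempty
  have hgrow := pow_mul_le_of_edge_counts (k := k) (a := fun i => (distLayer G x i).ncard)
    (e := fun i => (G.between (distLayer G x i) (distLayer G x (i + 1))).edgeSet.ncard)
    (fun i => Nat.cast_nonneg _) (by positivity) hq hqd
    (fun i hi => mod_cast ncard_edgeSet_between_distLayer_le hG hcyc hi)
    (mod_cast mul_ncard_distLayer_zero_le hG hd x)
    (fun i => mod_cast mul_ncard_distLayer_add_one_le hG hbip hd x i)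
  simp only [distLayer_zero hG, Set.ncard_singleton, Nat.cast_one, mul_one] at hgrow
  refine hgrow.trans ?_
  exact_mod_cast (Set.ncard_le_card (distLayer G x k)).trans_eq Nat.card_eq_fintype_card

end NoCycle

theorem hasCycleLength_of_card_le_pow_of_le_degree {V : Type} [Fintype V] {G : SimpleGraph V}
    {k d : ℕ} {y : ℝ} (hk : 0 < k) (hG : G.Connected) (hbip : G.IsBipartite) (hy : 1 ≤ y)
    (hcard : Fintype.card V ≤ y ^ k) (hd : ∀ v, d ≤ G.degree v) (hyd : 8 * k * y < d) :
    HasCycleLength G (2 * k) := by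
  by_contra hcyc
  have hyq : y < d / (2 * k) - 3 := by
    rw [lt_sub_iff_add_lt, lt_div_iff₀ (by positivity)]
    linarith [mul_le_mul_of_nonneg_left hy k.cast_nonneg]
  have hpow := pow_le_card_of_not_hasCycleLength hG hbip hcyc hk hd (hy.trans hyq.le)
    (by rw [sub_add_cancel, mul_div_cancel₀ _ (by positivity)])
  exact (pow_lt_pow_left₀ hyq (by positivity) hk.ne').not_ge (hpow.trans hcard)

theorem bondy_simonovits_general {V : Type} [Fintype V] {k : ℕ} (hk : 0 < k) (G : SimpleGraph V)
    (hedges : 16 * (k : ℝ) * (Fintype.card V : ℝ) ^ ((1 : ℝ) + 1 / (k : ℝ)) <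
      (G.edgeSet.ncard : ℝ)) :
    HasCycleLength G (2 * k) := by
  obtain ⟨S, hS⟩ := exists_ncard_edgeSet_le_two_mul_between G
  set y : ℝ := (Fintype.card V : ℝ) ^ (1 / (k : ℝ)) with hy
  have hV : 0 < Fintype.card V := by
    by_contra! hV
    have := Fintype.card_eq_zero_iff.1 (Nat.le_zero.1 hV)
    have : (0 : ℝ) < G.edgeSet.ncard := hedges.trans_le' (by positivity)
    simp [Subsingleton.elim G ⊥] at this
  have hy₁ : 1 ≤ y := Real.one_le_rpow (mod_cast hV) (by positivity)
  have hyk : (Fintype.card V : ℝ) = y ^ k := by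
    rw [hy, one_div, Real.rpow_inv_natCast_pow (by positivity) hk.ne']
  rw [Real.rpow_one_add' (by positivity) (by positivity), ← hy] at hedges
  have hdense : ⌊8 * k * y⌋₊ * Fintype.card V < (G.between S Sᶜ).edgeSet.ncard := by
    have hfloor : (⌊8 * k * y⌋₊ : ℝ) * Fintype.card V ≤ 8 * k * y * Fintype.card V := by
      gcongr; exact Nat.floor_le (by positivity)
    have hS' : (G.edgeSet.ncard : ℝ) ≤ 2 * (G.between S Sᶜ).edgeSet.ncard := mod_cast hS
    have : (⌊8 * k * y⌋₊ : ℝ) * Fintype.card V < (G.between S Sᶜ).edgeSet.ncard := by linarith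
    exact_mod_cast this
  obtain ⟨H, hH, s, hconn, hdeg⟩ := exists_le_induce_connected_lt_degree _ hdense
  have hbip : (H.induce s).IsBipartite :=
    ((SimpleGraph.between_isBipartite disjoint_compl_right).mono_left hH).of_hom
      (SimpleGraph.Embedding.induce s).toHom
  have hcyc := hasCycleLength_of_card_le_pow_of_le_degree hk hconn hbip hy₁
    (hyk ▸ mod_cast Fintype.card_subtype_le _) hdeg (mod_cast Nat.lt_floor_add_one _)
  exact (hcyc.map (SimpleGraph.Embedding.induce s).toHom Subtype.val_injective).mono
    (hH.trans SimpleGraph.between_le)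

/-- Bondy–Simonovits: a graph on n vertices with more than 90k·n^(1+1/k) edges contains
a cycle of length 2k. -/
theorem bondy_simonovits (k : ℕ) (hk : 0 < k) (n : ℕ) (G : SimpleGraph (Fin n))
    (hedges : 90 * (k : ℝ) * (n : ℝ) ^ ((1 : ℝ) + 1 / (k : ℝ)) < (G.edgeSet.ncard : ℝ)) :
    HasCycleLength G (2 * k) :=
  bondy_simonovits_general hk G (by
    rw [Fintype.card_fin]; exact hedges.trans_le' (by gcongr; norm_num))
end
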